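/- arXiv:1202.0874 — 2 statements merged into one kernel-verified Lean document; each statement's English description precedes it below -/
import Mathlib

section
/- Let p, q, a, b, c be positive integers and let s be a complex number with Re(s) > 1. Then S_{λ₃}(p,q,a,b,c,s) = (−1)^p Σ_{j=0}^{p} (−1)^j Λ(j;i) Σ_{ω=0}^{p−j} C(ω+a−1,ω) C(p+c−j−ω−1,c−1) T(q+a+ω, s, p+b+c−j−ω; −1, −i) + (−1)^{p+a} Σ_{j=0}^{c} Λ(j;i) Σ_{ω=0}^{c−j} C(ω+a−1,ω) C(p+c−j−ω−1,p−1) T(q, s+a+ω, p+b+c−j−ω; i, −1) + (−1)^p Σ_{j=0}^{a} Λ(j;i) Σ_{ω=0}^{p−1} C(ω+a−j,ω) C(p+c−2−ω,c−1) T(q+a−j+ω+1, s, p+b+c−1−ω; i, −i) + (−1)^{p+a} Σ_{j=0}^{a} (−1)^j Λ(j;i) Σ_{ω=0}^{c−1} C(ω+a−j,ω) C(p+c−2−ω,p−1) T(q, s+a−j+ω+1, p+b+c−1−ω; i, −i), where C(n,k) denotes the binomial coefficient. -/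
open Complex Finset

/-- The primitive Dirichlet character of conductor 4 with values in `ℂ`. -/
noncomputable def chi4 : DirichletCharacter ℂ 4 := ZMod.χ₄.ringHomComp (Int.castRingHom ℂ)

/-- `L(s,χ₄)`, equal to `Σ_{m ≥ 0} (-1)^m (2m+1)^{-s}` at the relevant arguments. -/
noncomputable def Lchi4 (s : ℂ) : ℂ := DirichletCharacter.LFunction chi4 s

/-- `Λ(ξ;i)`: equal to `2^{1-ξ}(2^{1-ξ}-1)ζ(ξ)` for even `ξ`, and to
`2i L(ξ,χ₄)` for odd `ξ`. -/
noncomputable def LamI (ξ : ℕ) : ℂ :=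
  if Even ξ then (2 : ℂ) ^ ((1 : ℤ) - ξ) * ((2 : ℂ) ^ ((1 : ℤ) - ξ) - 1) * riemannZeta ξ
  else 2 * Complex.I * Lchi4 ξ

/-- `T(p,s,q;x,y) = Σ_{l ≠ 0, m ≥ 1, l+m ≠ 0} x^l y^m / (l^p m^s (l+m)^q)`. -/
noncomputable def T (p : ℕ) (s : ℂ) (q : ℕ) (x y : ℂ) : ℂ :=
  ∑' lm : ℤ × ℕ,
    if lm.1 ≠ 0 ∧ lm.1 + ((lm.2 : ℤ) + 1) ≠ 0 then
      x ^ lm.1 * y ^ (lm.2 + 1) /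
        ((lm.1 : ℂ) ^ p * (((lm.2 + 1 : ℕ) : ℂ)) ^ s *
          (((lm.1 + (lm.2 : ℤ) + 1 : ℤ) : ℂ)) ^ q)
    else 0

/-- Generic triple zeta-sum of type `A₃` with a weight `w` on `(l,m,n)`. -/
noncomputable def Z3 (w : ℕ → ℕ → ℕ → ℂ) (s₁ s₂ s₃ s₄ s₅ s₆ : ℂ) : ℂ :=
  ∑' t : ℕ × ℕ × ℕ,
    w (t.1 + 1) (t.2.1 + 1) (t.2.2 + 1) /
      ((((t.1 + 1 : ℕ) : ℂ)) ^ s₁ * (((t.2.1 + 1 : ℕ) : ℂ)) ^ s₂ *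
        (((t.2.2 + 1 : ℕ) : ℂ)) ^ s₃ * (((t.1 + 1 + (t.2.1 + 1) : ℕ) : ℂ)) ^ s₄ *
        (((t.2.1 + 1 + (t.2.2 + 1) : ℕ) : ℂ)) ^ s₅ *
        (((t.1 + 1 + (t.2.1 + 1) + (t.2.2 + 1) : ℕ) : ℂ)) ^ s₆)

/-- `ζ₃(s₁,…,s₆,λ₃∨;SU(4))`, with numerator `i^{l+2m+3n}`. -/
noncomputable def Zlam3 : ℂ → ℂ → ℂ → ℂ → ℂ → ℂ → ℂ :=
  Z3 (fun l m n => Complex.I ^ (l + 2 * m + 3 * n))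

/-- The twelve-term alternating combination `S` built from a six-variable zeta `Z`. -/
noncomputable def Scomb (Z : ℂ → ℂ → ℂ → ℂ → ℂ → ℂ → ℂ) (p q a b c : ℕ) (s : ℂ) : ℂ :=
  Z p q s a b c + (-1 : ℂ) ^ p * Z p a s q c b + (-1 : ℂ) ^ (p + a) * Z q a c p s b +
    (-1 : ℂ) ^ (p + a + c) * Z q s c b a p + (-1 : ℂ) ^ q * Z a q b p s c +
    (-1 : ℂ) ^ (q + b) * Z a s b c q p + (-1 : ℂ) ^ (q + a) * Z a p b q c s +
    (-1 : ℂ) ^ (q + a + b) * Z a c b s p q + (-1 : ℂ) ^ (q + a + b + c) * Z s c p a b q +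
    (-1 : ℂ) ^ (p + q + a) * Z q p c a b s + (-1 : ℂ) ^ (p + q + a + c) * Z q b c s p a +
    (-1 : ℂ) ^ (p + q + a + b + c) * Z s b p q c a

/-- The right-hand side `J₃` of the functional relation for `ζ₃(·,λ₃∨;SU(4))`. -/
noncomputable def J3 (p q a b c : ℕ) (s : ℂ) : ℂ :=
  (-1 : ℂ) ^ p * ∑ j ∈ range (p + 1), (-1 : ℂ) ^ j * LamI j *
      ∑ ω ∈ range (p - j + 1),
        (Nat.choose (ω + a - 1) ω : ℂ) * (Nat.choose (p + c - j - ω - 1) (c - 1) : ℂ) *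
          T (q + a + ω) s (p + b + c - j - ω) (-1) (-Complex.I) +
  (-1 : ℂ) ^ (p + a) * ∑ j ∈ range (c + 1), LamI j *
      ∑ ω ∈ range (c - j + 1),
        (Nat.choose (ω + a - 1) ω : ℂ) * (Nat.choose (p + c - j - ω - 1) (p - 1) : ℂ) *
          T q (s + a + ω) (p + b + c - j - ω) Complex.I (-1) +
  (-1 : ℂ) ^ p * ∑ j ∈ range (a + 1), LamI j *
      ∑ ω ∈ range p,
        (Nat.choose (ω + a - j) ω : ℂ) * (Nat.choose (p + c - 2 - ω) (c - 1) : ℂ) *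
          T (q + a - j + ω + 1) s (p + b + c - 1 - ω) Complex.I (-Complex.I) +
  (-1 : ℂ) ^ (p + a) * ∑ j ∈ range (a + 1), (-1 : ℂ) ^ j * LamI j *
      ∑ ω ∈ range c,
        (Nat.choose (ω + a - j) ω : ℂ) * (Nat.choose (p + c - 2 - ω) (p - 1) : ℂ) *
          T q (s + ((a - j : ℕ) : ℂ) + ω + 1) (p + b + c - 1 - ω) Complex.I (-Complex.I)


/-- Symmetric conditional summation over the integers. -/
def CS (f : ℤ → ℂ) (A : ℂ) : Prop :=
  Filter.Tendsto (fun M : ℕ => ∑ n ∈ range M, (f (n : ℤ) + f (-(n : ℤ)))) Filter.atTop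
    (nhds (A + f 0))

theorem CS.of_hasSum {f : ℤ → ℂ} {A : ℂ} (h : HasSum f A) : CS f A :=
  h.nat_add_neg.tendsto_sum_nat

theorem CS.unique {f : ℤ → ℂ} {A B : ℂ} (h : CS f A) (h' : CS f B) : A = B := by
  have := tendsto_nhds_unique h h'
  exact add_right_cancel this

theorem CS.sub {f g : ℤ → ℂ} {A B : ℂ} (h : CS f A) (h' : CS g B) :
    CS (fun l => f l - g l) (A - B) := by
  unfold CS at *
  convert Filter.Tendsto.sub h h' using 2
  · rw [← Finset.sum_sub_distrib]
    exact Finset.sum_congr rfl fun _ _ => by ring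
  · ring

theorem CS.mul {f : ℤ → ℂ} {A : ℂ} (h : CS f A) (k : ℂ) :
    CS (fun l => k * f l) (k * A) := by
  unfold CS at *
  convert Filter.Tendsto.const_mul k h using 2
  · rw [Finset.mul_sum]
    exact Finset.sum_congr rfl fun _ _ => by ring
  · ring

theorem tendsto_natcast_cof : Filter.Tendsto (fun M : ℕ => (M : ℤ)) Filter.atTop Filter.cofinite := by
  rw [← Nat.cofinite_eq_atTop]
  exact Nat.cast_injective.tendsto_cofinite

theorem tendsto_one_sub_natcast_cof :
    Filter.Tendsto (fun M : ℕ => 1 - (M : ℤ)) Filter.atTop Filter.cofinite := by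
  rw [← Nat.cofinite_eq_atTop]
  apply Function.Injective.tendsto_cofinite
  intro x y h
  simp only at h
  omega

theorem shift_diff (f : ℤ → ℂ) (M : ℕ) :
    ∑ n ∈ range M, (f ((n : ℤ) + 1) + f (-(n : ℤ) + 1)) =
      ∑ n ∈ range M, (f (n : ℤ) + f (-(n : ℤ))) + (f M - f (1 - M) + f 1 - f 0) := by
  induction M with
  | zero => simp
  | succ M ih =>
    rw [Finset.sum_range_succ, Finset.sum_range_succ, ih]
    push_cast
    rw [show (1 - ((M : ℤ) + 1)) = -(M : ℤ) by ring, show -(M : ℤ) + 1 = 1 - M by ring]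
    ring

theorem CS.shift_one {f : ℤ → ℂ} {A : ℂ} (h0 : Filter.Tendsto f Filter.cofinite (nhds 0)) :
    CS f A ↔ CS (fun l => f (l + 1)) A := by
  have h1 := h0.comp tendsto_natcast_cof
  have h2 := h0.comp tendsto_one_sub_natcast_cof
  have h3 := ((h1.sub h2).add_const (f 1)).sub_const (f 0)
  unfold CS
  simp only [shift_diff]
  constructor
  · intro h
    convert h.add h3 using 2
    · rfl
    · rw [zero_add]; ring
  · intro h
    convert h.sub h3 using 2
    · simp
    · rw [zero_add]; ring

theorem CS.shift {f : ℤ → ℂ} {A : ℂ} (h0 : Filter.Tendsto f Filter.cofinite (nhds 0))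
    (h : CS f A) (r : ℤ) : CS (fun l => f (l + r)) A := by
  have key : ∀ r : ℤ, Filter.Tendsto (fun l => f (l + r)) Filter.cofinite (nhds 0) := fun r =>
    h0.comp (add_left_injective r).tendsto_cofinite
  induction r using Int.induction_on with
  | zero => simpa using h
  | succ i ih =>
    have := (CS.shift_one (key i)).1 ih
    convert this using 3
    ring
  | pred i ih =>
    apply (CS.shift_one (key _)).2
    convert ih using 3
    ring

noncomputable def Vs (r : ℂ) (d : ℕ) : PowerSeries ℂ :=
  PowerSeries.mk fun k => (-1 : ℂ) ^ k * (Nat.choose (k + d - 1) k : ℂ) / r ^ (d + k)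

noncomputable def Lf (p : ℕ) (ψ : PowerSeries ℂ) : ℂ :=
  ∑ j ∈ range (p + 1), LamI j * PowerSeries.coeff (p - j) ψ

theorem Vs_zero (r : ℂ) : Vs r 0 = 1 := by
  ext k
  rcases k with _ | k
  · simp [Vs]
  · simp [Vs, PowerSeries.coeff_one]

theorem Vs_succ (r : ℂ) (hr : r ≠ 0) (d : ℕ) :
    PowerSeries.X * Vs r (d + 1) + PowerSeries.C r * Vs r (d + 1) = Vs r d := by
  ext k
  rcases k with _ | k
  · simp [Vs]
    rw [pow_succ]; field_simp
  · simp only [map_add, PowerSeries.coeff_succ_X_mul, PowerSeries.coeff_C_mul, Vs,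
      PowerSeries.coeff_mk]
    rw [show k + (d + 1) - 1 = k + d by omega, show k + 1 + (d + 1) - 1 = k + d + 1 by omega,
      show k + 1 + d - 1 = k + d by omega, Nat.choose_succ_succ]
    push_cast
    field_simp
    ring

theorem Lf_add (p : ℕ) (f g : PowerSeries ℂ) : Lf p (f + g) = Lf p f + Lf p g := by
  simp [Lf, mul_add, Finset.sum_add_distrib]

theorem Lf_sub (p : ℕ) (f g : PowerSeries ℂ) : Lf p (f - g) = Lf p f - Lf p g := by
  simp [Lf, mul_sub, Finset.sum_sub_distrib]

theorem Lf_C (p : ℕ) (r : ℂ) (f : PowerSeries ℂ) : Lf p (PowerSeries.C r * f) = r * Lf p f := by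
  simp only [Lf, Finset.mul_sum, PowerSeries.coeff_C_mul]
  exact Finset.sum_congr rfl fun _ _ => by ring

theorem Lf_X (p : ℕ) (f : PowerSeries ℂ) : Lf (p + 1) (PowerSeries.X * f) = Lf p f := by
  rw [Lf, Finset.sum_range_succ, Lf]
  simp only [Nat.sub_self, PowerSeries.coeff_zero_X_mul, mul_zero, add_zero]
  refine Finset.sum_congr rfl fun j hj => ?_
  have : j ≤ p := by simpa [Nat.lt_succ_iff] using hj
  rw [show p + 1 - j = (p - j) + 1 by omega, PowerSeries.coeff_succ_X_mul]

theorem LamI_zero : LamI 0 = -1 := by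
  simp [LamI, riemannZeta_zero]
  norm_num

noncomputable def Gf (α β γ : ℤ) (p a c : ℕ) : ℂ :=
  I ^ α * Lf p (Vs (α - β) a * Vs (α - γ) c) + I ^ β * Lf a (Vs (β - α) p * Vs (β - γ) c) +
    I ^ γ * Lf c (Vs (γ - α) p * Vs (γ - β) a)

noncomputable def Ff (α β γ : ℤ) (p a c : ℕ) (l : ℤ) : ℂ :=
  if l = α ∨ l = β ∨ l = γ then 0
  else I ^ l / (((l : ℂ) - α) ^ p * ((l : ℂ) - β) ^ a * ((l : ℂ) - γ) ^ c)

theorem Gf_swap1 (α β γ : ℤ) (p a c : ℕ) : Gf α β γ p a c = Gf β α γ a p c := by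
  unfold Gf
  rw [mul_comm (Vs ((γ : ℂ) - α) p)]
  ring

theorem Gf_swap2 (α β γ : ℤ) (p a c : ℕ) : Gf α β γ p a c = Gf α γ β p c a := by
  unfold Gf
  rw [mul_comm (Vs ((α : ℂ) - β) a)]
  ring

theorem Ff_swap1 (α β γ : ℤ) (p a c : ℕ) : Ff α β γ p a c = Ff β α γ a p c := by
  ext l
  unfold Ff
  congr 1
  · exact propext (by tauto)
  · ring

theorem Ff_swap2 (α β γ : ℤ) (p a c : ℕ) : Ff α β γ p a c = Ff α γ β p c a := by
  ext l
  unfold Ff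
  congr 1
  · exact propext (by tauto)
  · ring

theorem intcast_sub_ne {x y : ℤ} (h : x ≠ y) : (x : ℂ) - y ≠ 0 := by
  rw [sub_ne_zero]; exact_mod_cast h

theorem Ff_rec (α β γ : ℤ) (h : α ≠ β) (p a c : ℕ) (l : ℤ) :
    Ff α β γ (p + 1) (a + 1) c l =
      ((α : ℂ) - β)⁻¹ * (Ff α β γ (p + 1) a c l - Ff α β γ p (a + 1) c l) := by
  unfold Ff
  split_ifs with hl
  · simp
  · push Not at hl
    have h1 := intcast_sub_ne hl.1
    have h2 := intcast_sub_ne hl.2.1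
    have h3 := intcast_sub_ne hl.2.2
    have h4 := intcast_sub_ne h
    field_simp
    ring

theorem Gf_rec (α β γ : ℤ) (h : α ≠ β) (hγ : α ≠ γ) (hβ : β ≠ γ) (p a c : ℕ) :
    Gf α β γ (p + 1) (a + 1) c =
      ((α : ℂ) - β)⁻¹ * (Gf α β γ (p + 1) a c - Gf α β γ p (a + 1) c) := by
  have h1 := intcast_sub_ne h
  rw [eq_inv_mul_iff_mul_eq₀ h1]
  have e1 : ((α : ℂ) - β) * Lf (p + 1) (Vs (α - β) (a + 1) * Vs (α - γ) c) =
      Lf (p + 1) (Vs (α - β) a * Vs (α - γ) c) - Lf p (Vs (α - β) (a + 1) * Vs (α - γ) c) := by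
    rw [← Lf_C, ← Lf_X p, ← Lf_sub, ← Vs_succ _ h1 a]
    congr 1; ring
  have e2 : ((α : ℂ) - β) * Lf (a + 1) (Vs (β - α) (p + 1) * Vs (β - γ) c) =
      Lf a (Vs (β - α) (p + 1) * Vs (β - γ) c) - Lf (a + 1) (Vs (β - α) p * Vs (β - γ) c) := by
    have h1' := intcast_sub_ne h.symm
    rw [← Lf_C, ← Lf_X a, ← Lf_sub, ← Vs_succ _ h1' p]
    congr 1
    rw [show (α : ℂ) - β = -(β - α) by ring, map_neg]
    ring
  have e3 : ((α : ℂ) - β) * Lf c (Vs (γ - α) (p + 1) * Vs (γ - β) (a + 1)) =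
      Lf c (Vs (γ - α) (p + 1) * Vs (γ - β) a) - Lf c (Vs (γ - α) p * Vs (γ - β) (a + 1)) := by
    rw [← Lf_C, ← Lf_sub, ← Vs_succ _ (intcast_sub_ne hβ.symm) a,
      ← Vs_succ _ (intcast_sub_ne hγ.symm) p]
    congr 1
    rw [show (α : ℂ) - β = (γ - β) - (γ - α) by ring, map_sub]
    ring
  unfold Gf
  linear_combination I ^ α * e1 + I ^ β * e2 + I ^ γ * e3

theorem Lf_zero (f : PowerSeries ℂ) : Lf 0 f = - PowerSeries.coeff 0 f := by
  simp [Lf, LamI_zero]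

theorem Lf_one (p : ℕ) : Lf p 1 = LamI p := by
  rw [Lf, Finset.sum_range_succ, Finset.sum_eq_zero]
  · simp
  · intro j hj
    have : p - j ≠ 0 := by simp at hj; omega
    simp [PowerSeries.coeff_one, this]

theorem tendsto_base (p : ℕ) (hp : 0 < p) :
    Filter.Tendsto (fun l : ℤ => I ^ l / (l : ℂ) ^ p) Filter.cofinite (nhds 0) := by
  rw [tendsto_zero_iff_norm_tendsto_zero]
  have h : Filter.Tendsto (fun l : ℤ => ‖(l : ℂ)‖) Filter.cofinite Filter.atTop := by
    rw [← Filter.cocompact_eq_cofinite]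
    have := tendsto_norm_cocompact_atTop (E := ℤ)
    refine this.congr fun l => ?_
    simp [Int.norm_eq_abs]
  have h2 := (Filter.tendsto_pow_atTop hp.ne').comp h
  refine h2.inv_tendsto_atTop.congr fun l => ?_
  simp [norm_zpow]

theorem main_base (hb : ∀ p : ℕ, 0 < p → CS (fun l => I ^ l / (l : ℂ) ^ p) (LamI p))
    (α β γ : ℤ) (h : α ≠ β) (hγ : α ≠ γ) (hβ : β ≠ γ) (p : ℕ) (hp : 0 < p) :
    CS (Ff α β γ p 0 0) (Gf α β γ p 0 0) := by
  have h1 := ((CS.shift (tendsto_base p hp) (hb p hp) (-α)).mul (I ^ α)).sub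
    (CS.of_hasSum (hasSum_ite_eq β (I ^ β / ((β : ℂ) - α) ^ p)))
  have h2 := h1.sub (CS.of_hasSum (hasSum_ite_eq γ (I ^ γ / ((γ : ℂ) - α) ^ p)))
  convert h2 using 1
  · ext l
    unfold Ff
    have hI : I ^ α * (I ^ (l + -α) / ((l + -α : ℤ) : ℂ) ^ p) = I ^ l / ((l : ℂ) - α) ^ p := by
      rw [zpow_add₀ I_ne_zero, zpow_neg]
      push_cast
      rw [← sub_eq_add_neg]
      have := zpow_ne_zero α I_ne_zero
      field_simp
    rw [hI]
    by_cases k1 : l = α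
    · subst k1; simp [h, hγ, hp.ne']
    by_cases k2 : l = β
    · subst k2; simp [hβ]
    by_cases k3 : l = γ
    · subst k3; simp [hβ.symm]
    simp [k1, k2, k3]
  · unfold Gf
    rw [Vs_zero, Vs_zero, Vs_zero, Vs_zero, mul_one, Lf_one, Lf_zero, Lf_zero]
    simp [Vs]
    ring

theorem main_CS (hb : ∀ p : ℕ, 0 < p → CS (fun l => I ^ l / (l : ℂ) ^ p) (LamI p)) (n : ℕ) :
    ∀ (α β γ : ℤ) (_ : α ≠ β) (_ : α ≠ γ) (_ : β ≠ γ) (p a c : ℕ) (_ : p + a + c = n + 1),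
    CS (Ff α β γ p a c) (Gf α β γ p a c) := by
  induction n with
  | zero =>
    intro α β γ h hγ hβ p a c hs
    rcases p with _ | p
    · rcases a with _ | a
      · rw [Ff_swap2, Gf_swap2, Ff_swap1, Gf_swap1]
        exact main_base hb _ _ _ hγ.symm hβ.symm h _ (by omega)
      · obtain rfl : c = 0 := by omega
        rw [Ff_swap1, Gf_swap1]
        exact main_base hb _ _ _ h.symm hβ hγ _ (by omega)
    · obtain rfl : c = 0 := by omega
      obtain rfl : a = 0 := by omega
      exact main_base hb _ _ _ h hγ hβ _ (by omega)
  | succ n ih =>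
    have key : ∀ (α β γ : ℤ) (_ : α ≠ β) (_ : α ≠ γ) (_ : β ≠ γ) (p a c : ℕ)
        (_ : (p + 1) + (a + 1) + c = n + 1 + 1),
        CS (Ff α β γ (p + 1) (a + 1) c) (Gf α β γ (p + 1) (a + 1) c) := by
      intro α β γ h hγ hβ p a c hs
      rw [Gf_rec α β γ h hγ hβ, funext (Ff_rec α β γ h p a c)]
      exact ((ih α β γ h hγ hβ _ _ _ (by omega)).sub (ih α β γ h hγ hβ _ _ _ (by omega))).mul _
    intro α β γ h hγ hβ p a c hs
    rcases p with _ | p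
    · rcases a with _ | a
      · rw [Ff_swap2, Gf_swap2, Ff_swap1, Gf_swap1]
        exact main_base hb _ _ _ hγ.symm hβ.symm h _ (by omega)
      · rcases c with _ | c
        · rw [Ff_swap1, Gf_swap1]
          exact main_base hb _ _ _ h.symm hβ hγ _ (by omega)
        · rw [Ff_swap1, Gf_swap1, Ff_swap2, Gf_swap2]
          exact key _ _ _ hβ h.symm hγ.symm _ _ _ (by omega)
    · rcases a with _ | a
      · rcases c with _ | c
        · exact main_base hb _ _ _ h hγ hβ _ (by omega)
        · rw [Ff_swap2, Gf_swap2]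
          exact key _ _ _ hγ h hβ.symm _ _ _ (by omega)
      · exact key _ _ _ h hγ hβ _ _ _ (by omega)

theorem I_zpow_congr {x y : ℤ} (h : (4 : ℤ) ∣ x - y) : (I : ℂ) ^ x = I ^ y := by
  obtain ⟨k, hk⟩ := h
  obtain rfl : x = y + 4 * k := by omega
  rw [zpow_add₀ I_ne_zero, zpow_mul]
  have : (I : ℂ) ^ (4 : ℤ) = 1 := by
    have := I_pow_four
    exact_mod_cast this
  simp [this]

theorem chi4_nat (n : ℕ) : (I : ℂ) ^ (n : ℤ) - I ^ (-(n : ℤ)) = 2 * I * chi4 (n : ZMod 4) := by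
  have h : n % 4 < 4 := Nat.mod_lt _ (by norm_num)
  have e1 : (I : ℂ) ^ (n : ℤ) = I ^ ((n % 4 : ℕ) : ℤ) := I_zpow_congr (by omega)
  have e2 : (I : ℂ) ^ (-(n : ℤ)) = I ^ (3 * (n % 4 : ℕ) : ℤ) := I_zpow_congr (by omega)
  have e3 : (n : ZMod 4) = ((n % 4 : ℕ) : ZMod 4) := by simp
  rw [e1, e2, e3]
  have hI : (I : ℂ) ^ (3 : ℤ) = -I := by exact_mod_cast I_pow_three
  have hI6 : (I : ℂ) ^ (6 : ℤ) = -1 := by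
    rw [show (6 : ℤ) = 3 * 2 by norm_num, zpow_mul, hI]; norm_cast; simp
  have hI9 : (I : ℂ) ^ (9 : ℤ) = I := by
    rw [I_zpow_congr (y := 1) (by norm_num)]; simp
  interval_cases n % 4
  · simp [chi4]
  · have : ZMod.χ₄ 1 = 1 := by decide
    simp [chi4, hI]; ring
  · have : ZMod.χ₄ 2 = 0 := by decide
    have : (I : ℂ) ^ (2 : ℤ) = -1 := by exact_mod_cast I_sq
    simp [chi4, *]
  · have : ZMod.χ₄ 3 = -1 := by decide
    simp [chi4, *]; ring

theorem even_nat (n : ℕ) : (I : ℂ) ^ (n : ℤ) + I ^ (-(n : ℤ)) =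
    -2 * (if 2 ∣ n then 1 else 0) + 4 * (if 4 ∣ n then 1 else 0) := by
  have h : n % 4 < 4 := Nat.mod_lt _ (by norm_num)
  have e1 : (I : ℂ) ^ (n : ℤ) = I ^ ((n % 4 : ℕ) : ℤ) := I_zpow_congr (by omega)
  have e2 : (I : ℂ) ^ (-(n : ℤ)) = I ^ (3 * (n % 4 : ℕ) : ℤ) := I_zpow_congr (by omega)
  have e3 : (2 ∣ n) = (2 ∣ n % 4) := propext (by omega)
  have e4 : (4 ∣ n) = (n % 4 = 0) := propext (by omega)
  simp only [e1, e2, e3, e4]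
  have hI : (I : ℂ) ^ (3 : ℤ) = -I := by exact_mod_cast I_pow_three
  have hI6 : (I : ℂ) ^ (6 : ℤ) = -1 := by
    rw [show (6 : ℤ) = 3 * 2 by norm_num, zpow_mul, hI]; norm_cast; simp
  have hI9 : (I : ℂ) ^ (9 : ℤ) = I := by
    rw [I_zpow_congr (y := 1) (by norm_num)]; simp
  have hI2 : (I : ℂ) ^ (2 : ℤ) = -1 := by exact_mod_cast I_sq
  interval_cases n % 4
  · norm_num
  · simp [hI]
  · norm_num [hI6, hI2]
  · norm_num [hI9, hI]

theorem hasSum_dvd (p d : ℕ) (hp : 1 < p) (hd : 0 < d) :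
    HasSum (fun n : ℕ => (if d ∣ n then (1 : ℂ) else 0) / (n : ℂ) ^ p)
      (1 / (d : ℂ) ^ p * riemannZeta p) := by
  have h1 : HasSum (fun n : ℕ => 1 / (n : ℂ) ^ p) (riemannZeta p) := by
    rw [zeta_nat_eq_tsum_of_gt_one hp]
    apply Summable.hasSum
    have := (Real.summable_one_div_nat_pow.2 hp)
    have h2 := Complex.ofRealCLM.summable this
    refine h2.congr fun n => ?_
    simp
  have hinj : Function.Injective (fun n : ℕ => d * n) := fun x y h => by
    simpa [hd.ne'] using h
  rw [← hinj.hasSum_iff]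
  · refine (h1.mul_left (1 / (d : ℂ) ^ p)).congr_fun ?_ 
    intro n
    simp [mul_pow]
    try ring
  · intro x hx
    have : ¬ d ∣ x := fun ⟨k, hk⟩ => hx ⟨k, hk.symm⟩
    simp [this]

theorem odd_t_bound (σ : ℝ) (h1 : 1 ≤ σ) (h2 : σ ≤ 2) (m : ℕ) :
    ‖((4 * m + 1 : ℕ) : ℝ) ^ (-σ) - ((4 * m + 3 : ℕ) : ℝ) ^ (-σ)‖ ≤ 4 / ((m : ℝ) + 1) ^ 2 := by
  set x : ℝ := ((4 * m + 1 : ℕ) : ℝ) with hx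
  have hxm : (m : ℝ) + 1 ≤ x := by
    rw [hx]; push_cast; have : (0 : ℝ) ≤ m := Nat.cast_nonneg m
    nlinarith [show (0 : ℝ) ≤ m from Nat.cast_nonneg m]
  have hm : (0 : ℝ) < (m : ℝ) + 1 := by positivity
  have hx1 : 1 ≤ x := by rw [hx]; push_cast; linarith [show (0 : ℝ) ≤ m from Nat.cast_nonneg m]
  have hx0 : 0 < x := by linarith
  have e : ((4 * m + 3 : ℕ) : ℝ) = x + 2 := by rw [hx]; push_cast; ring
  rw [e]
  have hb := one_add_mul_self_le_rpow_one_add (s := -2 / (x + 2)) (p := σ)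
    (by rw [le_div_iff₀ (by linarith)]; linarith) h1
  have e2 : 1 + -2 / (x + 2) = x / (x + 2) := by field_simp; ring
  rw [e2, Real.div_rpow hx0.le (by linarith)] at hb
  have hle : (x + 2) ^ (-σ) ≤ x ^ (-σ) := by
    apply Real.rpow_le_rpow_of_nonpos hx0 (by linarith) (by linarith)
  rw [Real.norm_of_nonneg (by linarith)]
  have hxs : 0 < x ^ σ := Real.rpow_pos_of_pos hx0 _
  have hxs2 : 0 < (x + 2) ^ σ := Real.rpow_pos_of_pos (by linarith) _
  have hxx : x ≤ x ^ σ := by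
    calc x = x ^ (1 : ℝ) := (Real.rpow_one x).symm
      _ ≤ x ^ σ := Real.rpow_le_rpow_of_exponent_le hx1 h1
  rw [Real.rpow_neg hx0.le, Real.rpow_neg (by linarith)]
  have e3 : (x ^ σ)⁻¹ - ((x + 2) ^ σ)⁻¹ = (x ^ σ)⁻¹ * (1 - x ^ σ / (x + 2) ^ σ) := by
    field_simp
  rw [e3]
  have h5 : 1 - x ^ σ / (x + 2) ^ σ ≤ 4 / x := by
    have : σ * (-2 / (x + 2)) ≥ - (4 / x) := by
      have k1 : 2 / (x + 2) ≤ 2 / x := by gcongr; linarith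
      have k2 : 0 ≤ 2 / (x + 2) := by positivity
      have k3 : σ * (2 / (x + 2)) ≤ 2 * (2 / x) := by gcongr
      have k4 : σ * (-2 / (x + 2)) = - (σ * (2 / (x + 2))) := by ring
      have k5 : 2 * (2 / x) = 4 / x := by ring
      linarith
    linarith
  calc (x ^ σ)⁻¹ * (1 - x ^ σ / (x + 2) ^ σ) ≤ (x ^ σ)⁻¹ * (4 / x) := by gcongr
    _ ≤ x⁻¹ * (4 / x) := by gcongr
    _ = 4 / x ^ 2 := by field_simp
    _ ≤ 4 / ((m : ℝ) + 1) ^ 2 := by gcongr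

theorem odd_t_bound_summable : Summable (fun m : ℕ => 4 / ((m : ℝ) + 1) ^ 2) := by
  have := (summable_nat_add_iff 1).2 (Real.summable_one_div_nat_pow.2 (one_lt_two))
  refine (this.mul_left 4).congr fun m => ?_
  push_cast
  ring

/-- paired terms of the Dirichlet series -/
noncomputable def tpair (σ : ℝ) (m : ℕ) : ℝ :=
  ((4 * m + 1 : ℕ) : ℝ) ^ (-σ) - ((4 * m + 3 : ℕ) : ℝ) ^ (-σ)

theorem chi4_vals : (chi4 0 = 0) ∧ (chi4 1 = 1) ∧ (chi4 2 = 0) ∧ (chi4 3 = -1) := by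
  have h0 : ZMod.χ₄ 0 = 0 := by decide
  have h1 : ZMod.χ₄ 1 = 1 := by decide
  have h2 : ZMod.χ₄ 2 = 0 := by decide
  have h3 : ZMod.χ₄ 3 = -1 := by decide
  simp [chi4, *]

theorem chi4_ne_one : chi4 ≠ 1 := by
  intro h
  have h3 := chi4_vals.2.2.2
  rw [h, MulChar.one_apply (by decide)] at h3
  norm_num at h3

theorem sum_four (σ : ℝ) (M : ℕ) :
    ∑ n ∈ range (4 * M), LSeries.term (fun n => chi4 (n : ZMod 4)) σ n =
      ((∑ m ∈ range M, tpair σ m : ℝ) : ℂ) := by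
  induction M with
  | zero => simp
  | succ M ih =>
    rw [show 4 * (M + 1) = 4 * M + 1 + 1 + 1 + 1 by ring]
    simp only [Finset.sum_range_succ, ih]
    have h4 : (4 : ZMod 4) = 0 := by decide
    have e1 : ((4 * M : ℕ) : ZMod 4) = 0 := by push_cast; simp [h4]
    have e2 : ((4 * M + 1 : ℕ) : ZMod 4) = 1 := by push_cast; simp [h4]
    have e3 : ((4 * M + 1 + 1 : ℕ) : ZMod 4) = 2 := by push_cast; simp [h4]; decide
    have e4 : ((4 * M + 1 + 1 + 1 : ℕ) : ZMod 4) = 3 := by push_cast; simp [h4]; decide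
    obtain ⟨c0, c1, c2, c3⟩ := chi4_vals
    rw [LSeries.term_of_ne_zero (n := 4 * M + 1 + 1 + 1) (by omega),
      LSeries.term_of_ne_zero (n := 4 * M + 1 + 1) (by omega),
      LSeries.term_of_ne_zero (n := 4 * M + 1) (by omega)]
    simp only [LSeries.term, e1, e2, e3, e4, c0, c1, c2, c3]
    simp only [tpair]
    rw [Complex.ofReal_add, Complex.ofReal_sub, Complex.ofReal_cpow (Nat.cast_nonneg _),
      Complex.ofReal_cpow (Nat.cast_nonneg _)]
    simp only [zero_div, ite_self, Complex.ofReal_neg, Complex.cpow_neg, Complex.ofReal_natCast]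
    ring

theorem L1_hasSum : HasSum (fun m => ((tpair 1 m : ℝ) : ℂ)) (Lchi4 1) := by
  have hsum : ∀ σ : ℝ, 1 ≤ σ → σ ≤ 2 → Summable (tpair σ) := fun σ h1 h2 =>
    Summable.of_norm_bounded odd_t_bound_summable (odd_t_bound σ h1 h2)
  have hL : ∀ σ : ℝ, 1 < σ → σ ≤ 2 → Lchi4 σ = ((∑' m, tpair σ m : ℝ) : ℂ) := by
    intro σ h1 h2
    have hre : 1 < (σ : ℂ).re := by simpa using h1
    have k1 : LSeriesSummable (fun n => chi4 (n : ZMod 4)) σ :=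
      ZMod.LSeriesSummable_of_one_lt_re _ hre
    have k2 := k1.LSeriesHasSum.tendsto_sum_nat
    have k3 := k2.comp (Filter.tendsto_id.const_mul_atTop' (r := 4) (by norm_num))
    rw [Lchi4, DirichletCharacter.LFunction_eq_LSeries _ hre]
    refine tendsto_nhds_unique k3 ?_
    have k4 := (Complex.continuous_ofReal.tendsto _).comp
      (hsum σ h1.le h2).hasSum.tendsto_sum_nat
    refine k4.congr fun M => ?_
    simp only [Function.comp, id]
    rw [sum_four]
  have t1 : Filter.Tendsto (fun σ : ℝ => ((∑' m, tpair σ m : ℝ) : ℂ)) (nhdsWithin 1 (Set.Ioc 1 2))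
      (nhds ((∑' m, tpair 1 m : ℝ) : ℂ)) := by
    apply (Complex.continuous_ofReal.tendsto _).comp
    apply tendsto_tsum_of_dominated_convergence odd_t_bound_summable
    · intro m
      apply Filter.Tendsto.mono_left _ nhdsWithin_le_nhds
      unfold tpair
      have hc : Continuous (fun σ : ℝ => ((4 * m + 1 : ℕ) : ℝ) ^ (-σ) - ((4 * m + 3 : ℕ) : ℝ) ^ (-σ)) := by
        apply Continuous.sub
        · exact Continuous.rpow continuous_const continuous_neg (fun _ => Or.inl (by positivity))
        · exact Continuous.rpow continuous_const continuous_neg (fun _ => Or.inl (by positivity))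
      exact hc.tendsto 1
    · filter_upwards [self_mem_nhdsWithin] with σ hσ m
      exact odd_t_bound σ hσ.1.le hσ.2 m
  have t2 : Filter.Tendsto (fun σ : ℝ => Lchi4 σ) (nhdsWithin 1 (Set.Ioc 1 2))
      (nhds (Lchi4 1)) := by
    apply Filter.Tendsto.mono_left _ nhdsWithin_le_nhds
    have hc : Continuous (fun σ : ℝ => Lchi4 σ) :=
      (DirichletCharacter.differentiable_LFunction chi4_ne_one).continuous.comp
        Complex.continuous_ofReal
    simpa using hc.tendsto 1
  have hne : (nhdsWithin (1 : ℝ) (Set.Ioc 1 2)).NeBot := by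
    rw [nhdsWithin_Ioc_eq_nhdsGT (by norm_num)]
    infer_instance
  have e : Lchi4 1 = ((∑' m, tpair 1 m : ℝ) : ℂ) := by
    refine tendsto_nhds_unique t2 (t1.congr' ?_)
    filter_upwards [self_mem_nhdsWithin] with σ hσ
    exact (hL σ hσ.1 hσ.2).symm
  rw [e]
  exact_mod_cast (hsum 1 le_rfl one_le_two).hasSum

theorem tendsto_of_four (S : ℕ → ℂ) (A : ℂ) (h0 : Filter.Tendsto (fun k => S (4 * k)) Filter.atTop (nhds A))
    (hd : Filter.Tendsto (fun n => S (n + 1) - S n) Filter.atTop (nhds 0)) :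
    Filter.Tendsto S Filter.atTop (nhds A) := by
  have h4 : ∀ r : ℕ, Filter.Tendsto (fun k : ℕ => 4 * k + r) Filter.atTop Filter.atTop := by
    intro r
    apply Filter.tendsto_atTop_mono (f := fun k => k) _ Filter.tendsto_id
    intro k
    omega
  have step : ∀ r : ℕ, Filter.Tendsto (fun k => S (4 * k + r)) Filter.atTop (nhds A) := by
    intro r
    induction r with
    | zero => simpa using h0
    | succ r ih =>
      have := ih.add (hd.comp (h4 r))
      simp only [add_zero] at this
      refine this.congr fun k => ?_
      simp only [Function.comp]
      rw [← add_assoc]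
      ring
  rw [Metric.tendsto_atTop]
  intro ε hε
  have hN : ∀ r : ℕ, ∃ N, ∀ n ≥ N, dist (S (4 * n + r)) A < ε := fun r =>
    Metric.tendsto_atTop.1 (step r) ε hε
  choose N hN using hN
  refine ⟨4 * (N 0 + N 1 + N 2 + N 3), fun n hn => ?_⟩
  have e : n = 4 * (n / 4) + n % 4 := by omega
  have hr : n % 4 < 4 := Nat.mod_lt _ (by norm_num)
  rw [e]
  apply hN
  interval_cases n % 4 <;> omega

theorem LamI_odd {p : ℕ} (h : ¬ Even p) : LamI p = 2 * I * Lchi4 p := by simp [LamI, h]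

theorem cs_base (p : ℕ) (hp : 0 < p) : CS (fun l => I ^ l / (l : ℂ) ^ p) (LamI p) := by
  unfold CS
  have e0 : LamI p + (fun l : ℤ => I ^ l / (l : ℂ) ^ p) 0 = LamI p := by simp [hp.ne']
  rw [e0]
  by_cases he : Even p
  · have hp1 : 1 < p := by
      rcases he with ⟨k, hk⟩; omega
    have h := ((hasSum_dvd p 2 hp1 (by norm_num)).mul_left (-2)).add
      ((hasSum_dvd p 4 hp1 (by norm_num)).mul_left 4)
    have h2 := h.tendsto_sum_nat
    convert h2 using 2
    · refine Finset.sum_congr rfl fun n _ => ?_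
      have := even_nat n
      simp only [Int.cast_neg, Int.cast_natCast, he.neg_pow]
      rw [← add_div, this]
      ring
    · simp only [LamI, he, if_true]
      rw [zpow_sub₀ two_ne_zero, zpow_one, zpow_natCast]
      push_cast
      rw [show (4 : ℂ) ^ p = 2 ^ p * 2 ^ p by rw [← mul_pow]; norm_num]
      field_simp
      ring
  · rw [LamI_odd he]
    have ho : Odd p := Nat.not_even_iff_odd.1 he
    have hterm : ∀ n : ℕ, (I ^ (n : ℤ) / ((n : ℤ) : ℂ) ^ p + I ^ (-(n : ℤ)) / ((-(n : ℤ) : ℤ) : ℂ) ^ p) =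
        2 * I * LSeries.term (fun n => chi4 (n : ZMod 4)) p n := by
      intro n
      have := chi4_nat n
      simp only [Int.cast_neg, Int.cast_natCast, ho.neg_pow]
      rw [div_neg, ← sub_eq_add_neg, ← sub_div, this]
      rcases Nat.eq_zero_or_pos n with rfl | hn
      · simp [hp.ne']
      · rw [LSeries.term_of_ne_zero hn.ne', Complex.cpow_natCast]
        ring
    simp only [hterm, ← Finset.mul_sum]
    apply Filter.Tendsto.const_mul
    rcases Nat.eq_or_lt_of_le (show 1 ≤ p from hp) with h1 | h1
    · subst h1
      apply tendsto_of_four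
      · have := L1_hasSum.tendsto_sum_nat
        simp only [Nat.cast_one]
        refine this.congr fun M => ?_
        have := sum_four 1 M
        rw [Complex.ofReal_one] at this
        rw [this]
        push_cast
        rfl
      · simp only [Finset.sum_range_succ, add_sub_cancel_left]
        rw [tendsto_zero_iff_norm_tendsto_zero]
        have k : Filter.Tendsto (fun n : ℕ => (n : ℝ)⁻¹) Filter.atTop (nhds 0) :=
          tendsto_inv_atTop_nhds_zero_nat
        refine squeeze_zero (fun _ => norm_nonneg _) (fun n => ?_) k
        rcases Nat.eq_zero_or_pos n with rfl | hn
        · simp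
        · rw [LSeries.term_of_ne_zero hn.ne', norm_div, Nat.cast_one, Complex.cpow_one,
            Complex.norm_natCast, div_eq_mul_inv]
          have := DirichletCharacter.norm_le_one chi4 (n : ZMod 4)
          have h' : 0 ≤ (n : ℝ)⁻¹ := by positivity
          nlinarith
    · have hre : 1 < ((p : ℕ) : ℂ).re := by simpa using h1
      have k1 : LSeriesSummable (fun n => chi4 (n : ZMod 4)) p :=
        ZMod.LSeriesSummable_of_one_lt_re _ hre
      have := k1.LSeriesHasSum.tendsto_sum_nat
      rwa [Lchi4, DirichletCharacter.LFunction_eq_LSeries _ hre]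

theorem coeff_Vs (r : ℂ) (d k : ℕ) : PowerSeries.coeff k (Vs r d) =
    (-1 : ℂ) ^ k * (Nat.choose (k + d - 1) k : ℂ) / r ^ (d + k) := by simp [Vs]

theorem coeff_Vs_mul (f g : PowerSeries ℂ) (k : ℕ) : PowerSeries.coeff k (f * g) =
    ∑ ω ∈ range (k + 1), PowerSeries.coeff ω f * PowerSeries.coeff (k - ω) g := by
  rw [PowerSeries.coeff_mul,
    Finset.Nat.sum_antidiagonal_eq_sum_range_succ
      (fun i j => PowerSeries.coeff i f * PowerSeries.coeff j g)]

theorem E1 (M N : ℂ) (p a c : ℕ) (hc : 0 < c) :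
    Lf p (Vs M a * Vs N c) = (-1 : ℂ) ^ p * ∑ j ∈ range (p + 1), (-1 : ℂ) ^ j * LamI j *
      ∑ ω ∈ range (p - j + 1),
        (Nat.choose (ω + a - 1) ω : ℂ) * (Nat.choose (p + c - j - ω - 1) (c - 1) : ℂ) *
          (1 / (M ^ (a + ω) * N ^ (p + c - j - ω))) := by
  simp only [Lf, coeff_Vs_mul, coeff_Vs, Finset.mul_sum]
  refine Finset.sum_congr rfl fun j hj => Finset.sum_congr rfl fun ω hω => ?_
  simp only [Finset.mem_range] at hj hω
  obtain ⟨u, rfl⟩ : ∃ u, p = j + ω + u := ⟨p - j - ω, by omega⟩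
  rw [show j + ω + u - j - ω = u by omega, show j + ω + u + c - j - ω - 1 = u + c - 1 by omega,
    show j + ω + u + c - j - ω = c + u by omega,
    Nat.choose_symm_of_eq_add (show u + c - 1 = u + (c - 1) by omega)]
  have h1 : ((-1 : ℂ) ^ j) * (-1) ^ j = 1 := by rw [← mul_pow]; norm_num
  simp only [pow_add]
  linear_combination (-LamI j * (-1) ^ ω * (-1) ^ u * ((ω + a - 1).choose ω : ℂ) *
    ((u + c - 1).choose (c - 1) : ℂ) * (1 / (M ^ a * M ^ ω * (N ^ c * N ^ u)))) * h1

theorem neg_pow_inv (x : ℂ) (d : ℕ) : ((-x) ^ d)⁻¹ = (-1) ^ d * (x ^ d)⁻¹ := by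
  rw [neg_pow, mul_inv, ← inv_pow]; norm_num

theorem neg_one_sq_pow (j : ℕ) : ((-1 : ℂ) ^ j) * (-1) ^ j = 1 := by
  rw [← mul_pow]; norm_num

theorem coeff_Vs_neg (r : ℂ) (d k : ℕ) : PowerSeries.coeff k (Vs (-r) d) =
    (-1 : ℂ) ^ d * (Nat.choose (k + d - 1) k : ℂ) / r ^ (d + k) := by
  rw [coeff_Vs, div_eq_mul_inv, neg_pow_inv, pow_add, pow_add]
  have h1 := neg_one_sq_pow k
  linear_combination ((-1) ^ d * (Nat.choose (k + d - 1) k : ℂ) * (r ^ d * r ^ k)⁻¹) * h1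

theorem E3 (n N : ℂ) (p a c : ℕ) (hp : 0 < p) :
    Lf c (Vs (-N) p * Vs (-n) a) = (-1 : ℂ) ^ (p + a) * ∑ j ∈ range (c + 1), LamI j *
      ∑ ω ∈ range (c - j + 1),
        (Nat.choose (ω + a - 1) ω : ℂ) * (Nat.choose (p + c - j - ω - 1) (p - 1) : ℂ) *
          (1 / (n ^ (a + ω) * N ^ (p + c - j - ω))) := by
  rw [mul_comm]
  simp only [Lf, coeff_Vs_mul, coeff_Vs_neg, Finset.mul_sum]
  refine Finset.sum_congr rfl fun j hj => Finset.sum_congr rfl fun ω hω => ?_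
  simp only [Finset.mem_range] at hj hω
  obtain ⟨u, rfl⟩ : ∃ u, c = j + ω + u := ⟨c - j - ω, by omega⟩
  rw [show j + ω + u - j - ω = u by omega, show p + (j + ω + u) - j - ω - 1 = u + p - 1 by omega,
    show p + (j + ω + u) - j - ω = p + u by omega,
    Nat.choose_symm_of_eq_add (show u + p - 1 = u + (p - 1) by omega)]
  ring

/-- half of the partial fraction expansion -/
noncomputable def Apf (M : PowerSeries ℂ) (x : PowerSeries ℂ) (P C : ℕ) : PowerSeries ℂ :=
  ∑ ω ∈ range (P + 1), (Nat.choose (P + C - ω) C : PowerSeries ℂ) * M ^ (P + C + 1 - ω) * x ^ (ω + 1)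

theorem Apf_rec (M x : PowerSeries ℂ) (P C : ℕ) :
    Apf M x (P + 1) (C + 1) = M * (Apf M x P (C + 1) + Apf M x (P + 1) C) := by
  unfold Apf
  rw [Finset.sum_range_succ _ (P + 1), Finset.sum_range_succ _ (P + 1)]
  rw [mul_add, mul_add, Finset.mul_sum, Finset.mul_sum, ← add_assoc (Finset.sum _ _),
    ← Finset.sum_add_distrib]
  congr 1
  · refine Finset.sum_congr rfl fun ω hω => ?_
    have hω : ω ≤ P := by simpa [Nat.lt_succ_iff] using hω
    obtain ⟨u, rfl⟩ := Nat.exists_eq_add_of_le hω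
    rw [show ω + u + 1 + (C + 1) - ω = u + C + 1 + 1 by omega,
      show ω + u + 1 + (C + 1) + 1 - ω = u + C + 3 by omega,
      show ω + u + (C + 1) - ω = u + C + 1 by omega,
      show ω + u + (C + 1) + 1 - ω = u + C + 2 by omega,
      show ω + u + 1 + C - ω = u + C + 1 by omega,
      show ω + u + 1 + C + 1 - ω = u + C + 2 by omega, Nat.choose_succ_succ]
    push_cast
    ring
  · rw [show P + 1 + (C + 1) - (P + 1) = C + 1 by omega,
      show P + 1 + (C + 1) + 1 - (P + 1) = C + 2 by omega,
      show P + 1 + C - (P + 1) = C by omega,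
      show P + 1 + C + 1 - (P + 1) = C + 1 by omega]
    simp
    ring

theorem Apf_zero (M x : PowerSeries ℂ) (C : ℕ) : Apf M x 0 C = M ^ (C + 1) * x := by
  simp [Apf]

theorem Apf_succ_zero (M x : PowerSeries ℂ) (P : ℕ) :
    Apf M x (P + 1) 0 = M * (Apf M x P 0 + x ^ (P + 2)) := by
  unfold Apf
  rw [Finset.sum_range_succ, mul_add, Finset.mul_sum]
  congr 1
  · refine Finset.sum_congr rfl fun ω hω => ?_
    have hω : ω ≤ P := by simpa [Nat.lt_succ_iff] using hω
    obtain ⟨u, rfl⟩ := Nat.exists_eq_add_of_le hω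
    rw [show ω + u + 1 + 0 + 1 - ω = u + 2 by omega,
      show ω + u + 0 + 1 - ω = u + 1 by omega]
    simp
    ring
  · simp

theorem pf (M x y : PowerSeries ℂ) (h : x * y = M * (x + y)) (P C : ℕ) :
    x ^ (P + 1) * y ^ (C + 1) = Apf M x P C + Apf M y C P := by
  induction P generalizing C with
  | zero =>
    induction C with
    | zero => simp [Apf_zero]; linear_combination h
    | succ C ih =>
      rw [Apf_succ_zero]
      rw [Apf_zero] at ih ⊢
      linear_combination y ^ (C + 1) * h + M * ih
  | succ P ihP =>
    induction C with
    | zero =>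
      have := ihP 0
      rw [Apf_succ_zero]
      rw [Apf_zero] at this ⊢
      linear_combination x ^ (P + 1) * h + M * this
    | succ C ih =>
      rw [Apf_rec, Apf_rec]
      linear_combination x ^ (P + 1) * y ^ (C + 1) * h + M * ihP (C + 1) + M * ih

theorem Vs_pow (r : ℂ) (hr : r ≠ 0) (d : ℕ) : Vs r d = (Vs r 1) ^ d := by
  induction d with
  | zero => simp [Vs_zero]
  | succ d ih =>
    have h1 := Vs_succ r hr d
    have h2 := Vs_succ r hr 0
    rw [Vs_zero, zero_add] at h2
    rw [pow_succ, ← ih, ← h1]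
    linear_combination (-Vs r (d + 1)) * h2

theorem Vs_rel (M n : ℂ) (hM : M ≠ 0) (hn : n ≠ 0) (hN : M + n ≠ 0) :
    (-Vs (-M) 1) * Vs n 1 = PowerSeries.C ((M + n)⁻¹) * (-Vs (-M) 1 + Vs n 1) := by
  have h1 := Vs_succ (-M) (neg_ne_zero.2 hM) 0
  have h2 := Vs_succ n hn 0
  rw [Vs_zero, zero_add] at h1 h2
  have hc : PowerSeries.C ((M + n)⁻¹) * PowerSeries.C (M + n) = (1 : PowerSeries ℂ) := by
    rw [← map_mul, inv_mul_cancel₀ hN, map_one]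
  rw [map_neg] at h1
  rw [map_add] at hc
  linear_combination (PowerSeries.C ((M + n)⁻¹) * Vs n 1) * h1
    - (PowerSeries.C ((M + n)⁻¹) * Vs (-M) 1) * h2 + Vs (-M) 1 * Vs n 1 * hc

theorem coeff_Apf (N : ℂ) (x : PowerSeries ℂ) (P C k : ℕ) :
    PowerSeries.coeff k (Apf (PowerSeries.C N⁻¹) x P C) =
      ∑ ω ∈ range (P + 1), (Nat.choose (P + C - ω) C : ℂ) * (1 / N ^ (P + C + 1 - ω)) *
        PowerSeries.coeff k (x ^ (ω + 1)) := by
  unfold Apf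
  rw [map_sum]
  refine Finset.sum_congr rfl fun ω _ => ?_
  have : (Nat.choose (P + C - ω) C : PowerSeries ℂ) * (PowerSeries.C N⁻¹) ^ (P + C + 1 - ω) =
      PowerSeries.C ((Nat.choose (P + C - ω) C : ℂ) * (1 / N ^ (P + C + 1 - ω))) := by
    rw [map_mul, one_div, ← inv_pow, map_pow]; simp
  rw [this, PowerSeries.coeff_C_mul]

theorem E2 (M n N : ℂ) (hM : M ≠ 0) (hn : n ≠ 0) (hN : N ≠ 0) (hMn : N = M + n) (p a c : ℕ)
    (hp : 0 < p) (hc : 0 < c) :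
    Lf a (Vs (-M) p * Vs n c) =
    (-1 : ℂ) ^ p * ∑ j ∈ range (a + 1), LamI j *
      ∑ ω ∈ range p,
        (Nat.choose (ω + a - j) ω : ℂ) * (Nat.choose (p + c - 2 - ω) (c - 1) : ℂ) *
          (1 / (M ^ (a - j + ω + 1) * N ^ (p + c - 1 - ω))) +
  (-1 : ℂ) ^ (p + a) * ∑ j ∈ range (a + 1), (-1 : ℂ) ^ j * LamI j *
      ∑ ω ∈ range c,
        (Nat.choose (ω + a - j) ω : ℂ) * (Nat.choose (p + c - 2 - ω) (p - 1) : ℂ) *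
          (1 / (n ^ (a - j + ω + 1) * N ^ (p + c - 1 - ω))) := by
  obtain ⟨P, rfl⟩ : ∃ P, p = P + 1 := ⟨p - 1, by omega⟩
  obtain ⟨C, rfl⟩ : ∃ C, c = C + 1 := ⟨c - 1, by omega⟩
  have hrel := Vs_rel M n hM hn (hMn ▸ hN)
  rw [← hMn] at hrel
  have hpf := pf _ _ _ hrel P C
  have e : Vs (-M) (P + 1) * Vs n (C + 1) = PowerSeries.C ((-1) ^ (P + 1)) *
      (Apf (PowerSeries.C N⁻¹) (-Vs (-M) 1) P C + Apf (PowerSeries.C N⁻¹) (Vs n 1) C P) := by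
    rw [← hpf, ← Vs_pow n hn, neg_pow (Vs (-M) 1), ← Vs_pow (-M) (neg_ne_zero.2 hM)]
    have : (PowerSeries.C ((-1 : ℂ) ^ (P + 1)) : PowerSeries ℂ) * (-1) ^ (P + 1) = 1 := by
      rw [map_pow, map_neg, map_one, ← mul_pow]; simp
    linear_combination (-(Vs (-M) (P + 1) * Vs n (C + 1))) * this
  rw [e, Lf_C, Lf_add, mul_add]
  congr 1
  · congr 1
    unfold Lf
    refine Finset.sum_congr rfl fun j hj => ?_
    have hj : j ≤ a := by simpa [Nat.lt_succ_iff] using hj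
    obtain ⟨u, rfl⟩ := Nat.exists_eq_add_of_le hj
    rw [coeff_Apf]
    congr 1
    refine Finset.sum_congr rfl fun ω _ => ?_
    rw [neg_pow, ← Vs_pow (-M) (neg_ne_zero.2 hM), 
      show ((-1 : PowerSeries ℂ) ^ (ω + 1)) = PowerSeries.C ((-1) ^ (ω + 1)) by simp,
      PowerSeries.coeff_C_mul, coeff_Vs_neg]
    rw [show j + u - j = u by omega, show ω + (j + u) - j = u + ω by omega,
      show u + (ω + 1) - 1 = u + ω by omega, show P + 1 + (C + 1) - 2 - ω = P + C - ω by omega,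
      show P + 1 + (C + 1) - 1 - ω = P + C + 1 - ω by omega, show C + 1 - 1 = C by omega,
      show ω + 1 + u = u + ω + 1 by omega, Nat.choose_symm_add]
    have h1 := neg_one_sq_pow (ω + 1)
    have h2 := neg_one_sq_pow (ω)
    ring_nf
    ring_nf at h1
    simp only [h1]
    ring
  · unfold Lf
    rw [pow_add (-1) (P + 1) a, mul_assoc]
    congr 1
    rw [Finset.mul_sum]
    refine Finset.sum_congr rfl fun j hj => ?_
    have hj : j ≤ a := by simpa [Nat.lt_succ_iff] using hj
    obtain ⟨u, rfl⟩ := Nat.exists_eq_add_of_le hj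
    rw [coeff_Apf, pow_add]
    have h1 := neg_one_sq_pow j
    have h2 : (-1 : ℂ) ^ j * (-1) ^ u * ((-1) ^ j * LamI j * ∑ ω ∈ range (C + 1),
        (Nat.choose (ω + (j + u) - j) ω : ℂ) * (Nat.choose (P + 1 + (C + 1) - 2 - ω) (P + 1 - 1) : ℂ) *
          (1 / (n ^ (j + u - j + ω + 1) * N ^ (P + 1 + (C + 1) - 1 - ω)))) = LamI j * ((-1) ^ u *
        ∑ ω ∈ range (C + 1),
        (Nat.choose (ω + (j + u) - j) ω : ℂ) * (Nat.choose (P + 1 + (C + 1) - 2 - ω) (P + 1 - 1) : ℂ) *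
          (1 / (n ^ (j + u - j + ω + 1) * N ^ (P + 1 + (C + 1) - 1 - ω)))) := by
      linear_combination (LamI j * ((-1) ^ u *
        ∑ ω ∈ range (C + 1),
        (Nat.choose (ω + (j + u) - j) ω : ℂ) * (Nat.choose (P + 1 + (C + 1) - 2 - ω) (P + 1 - 1) : ℂ) *
          (1 / (n ^ (j + u - j + ω + 1) * N ^ (P + 1 + (C + 1) - 1 - ω))))) * h1
    rw [h2]
    congr 1
    rw [Finset.mul_sum]
    refine Finset.sum_congr rfl fun ω _ => ?_
    rw [← Vs_pow n hn, coeff_Vs]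
    rw [show j + u - j = u by omega, show ω + (j + u) - j = u + ω by omega,
      show u + (ω + 1) - 1 = u + ω by omega, show P + 1 + (C + 1) - 2 - ω = C + P - ω by omega,
      show P + 1 + (C + 1) - 1 - ω = C + P + 1 - ω by omega, show P + 1 - 1 = P by omega,
      show ω + 1 + u = u + ω + 1 by omega, Nat.choose_symm_add]
    ring

/-- summand of `T` -/
noncomputable def Tt (p : ℕ) (s : ℂ) (q : ℕ) (x y : ℂ) (lm : ℤ × ℕ) : ℂ :=
    if lm.1 ≠ 0 ∧ lm.1 + ((lm.2 : ℤ) + 1) ≠ 0 then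
      x ^ lm.1 * y ^ (lm.2 + 1) /
        ((lm.1 : ℂ) ^ p * (((lm.2 + 1 : ℕ) : ℂ)) ^ s *
          (((lm.1 + (lm.2 : ℤ) + 1 : ℤ) : ℂ)) ^ q)
    else 0

theorem T_eq (p : ℕ) (s : ℂ) (q : ℕ) (x y : ℂ) : T p s q x y = ∑' lm, Tt p s q x y lm := rfl

/-- inverse square -/
noncomputable def usq (x : ℤ) : ℝ := 1 / (x : ℝ) ^ 2

theorem usq_nonneg (x : ℤ) : 0 ≤ usq x := by unfold usq; positivity

theorem usq_summable : Summable usq := Real.summable_one_div_int_pow.2 one_lt_two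

theorem inv_abs_pow_le (x : ℤ) (P : ℕ) (hP : 0 < P) : (|(x : ℝ)| ^ P)⁻¹ ≤ |(x : ℝ)|⁻¹ := by
  rcases eq_or_ne x 0 with rfl | hx
  · simp [hP.ne']
  · have h1 : (1 : ℝ) ≤ |(x : ℝ)| := by exact_mod_cast Int.one_le_abs hx
    have : |(x : ℝ)| ≤ |(x : ℝ)| ^ P := le_self_pow₀ h1 hP.ne'
    gcongr

theorem inv_abs_le_one (x : ℤ) (P : ℕ) : (|(x : ℝ)| ^ P)⁻¹ ≤ 1 := by
  rcases eq_or_ne x 0 with rfl | hx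
  · rcases P with _ | P <;> simp
  · have h1 : (1 : ℝ) ≤ |(x : ℝ)| := by exact_mod_cast Int.one_le_abs hx
    exact inv_le_one_of_one_le₀ (one_le_pow₀ h1)

theorem usq_bound (x y : ℤ) (P Q : ℕ) (hP : 0 < P) (hQ : 0 < Q) :
    (|(x : ℝ)| ^ P)⁻¹ * (|(y : ℝ)| ^ Q)⁻¹ ≤ usq x + usq y := by
  have h1 := inv_abs_pow_le x P hP
  have h2 := inv_abs_pow_le y Q hQ
  have h3 : (|(x : ℝ)| ^ P)⁻¹ * (|(y : ℝ)| ^ Q)⁻¹ ≤ |(x : ℝ)|⁻¹ * |(y : ℝ)|⁻¹ := by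
    gcongr
  have e1 : usq x = (|(x : ℝ)|⁻¹) ^ 2 := by rw [inv_pow, sq_abs, usq, one_div]
  have e2 : usq y = (|(y : ℝ)|⁻¹) ^ 2 := by rw [inv_pow, sq_abs, usq, one_div]
  rw [e1, e2]
  nlinarith [sq_nonneg (|(x : ℝ)|⁻¹ - |(y : ℝ)|⁻¹), sq_nonneg (|(x : ℝ)|⁻¹), sq_nonneg (|(y : ℝ)|⁻¹)]

/-- the two-variable majorant -/
noncomputable def B2 (σ : ℝ) (t : ℤ × ℕ) : ℝ :=
  (usq t.1 + usq (t.1 + t.2 + 1)) * (((t.2 + 1 : ℕ) : ℝ) ^ σ)⁻¹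

theorem B2_nonneg (σ : ℝ) (t : ℤ × ℕ) : 0 ≤ B2 σ t := by
  unfold B2
  have := usq_nonneg t.1
  have := usq_nonneg (t.1 + t.2 + 1)
  positivity

theorem v_summable {σ : ℝ} (hσ : 1 < σ) : Summable (fun k : ℕ => (((k + 1 : ℕ) : ℝ) ^ σ)⁻¹) :=
  (summable_nat_add_iff 1).2 (Real.summable_nat_rpow_inv.2 hσ)

theorem B2_summable {σ : ℝ} (hσ : 1 < σ) : Summable (B2 σ) := by
  have h1 : Summable (fun t : ℤ × ℕ => usq t.1 * (((t.2 + 1 : ℕ) : ℝ) ^ σ)⁻¹) :=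
    usq_summable.mul_of_nonneg (v_summable hσ) usq_nonneg (fun k => by positivity)
  have hinj : Function.Injective (fun t : ℤ × ℕ => (t.1 + t.2 + 1, t.2)) := by
    rintro ⟨a, b⟩ ⟨c, d⟩ h
    simp only [Prod.mk.injEq] at h ⊢
    omega
  have h2 := h1.comp_injective hinj
  refine (h1.add h2).congr fun t => ?_
  simp only [B2, Function.comp]
  ring

/-- the three-variable majorant -/
noncomputable def B3 (σ : ℝ) (t : (ℤ × ℕ) × ℤ) : ℝ := (usq t.2 + usq (t.2 + t.1.1)) * B2 σ t.1

theorem B3_summable {σ : ℝ} (hσ : 1 < σ) : Summable (B3 σ) := by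
  have h1 : Summable (fun t : (ℤ × ℕ) × ℤ => B2 σ t.1 * usq t.2) :=
    (B2_summable hσ).mul_of_nonneg usq_summable (B2_nonneg σ) usq_nonneg
  have hinj : Function.Injective (fun t : (ℤ × ℕ) × ℤ => (t.1, t.2 + t.1.1)) := by
    rintro ⟨⟨a, b⟩, e⟩ ⟨⟨c, d⟩, f⟩ h
    simp only [Prod.mk.injEq] at h ⊢
    omega
  have h2 := h1.comp_injective hinj
  refine (h1.add h2).congr fun t => ?_
  simp only [B3, Function.comp]
  ring

theorem norm_n_cpow (k : ℕ) (s : ℂ) : ‖(((k + 1 : ℕ) : ℂ)) ^ s‖ = ((k + 1 : ℕ) : ℝ) ^ s.re :=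
  Complex.norm_natCast_cpow_of_pos (Nat.succ_pos k) s

theorem Tt_summable (p : ℕ) (s : ℂ) (q : ℕ) (x y : ℂ) (hp : 0 < p) (hq : 0 < q) (hs : 1 < s.re)
    (hx : ‖x‖ = 1) (hy : ‖y‖ = 1) : Summable (Tt p s q x y) := by
  apply Summable.of_norm_bounded (B2_summable hs)
  rintro ⟨m, k⟩
  unfold Tt
  split_ifs with h
  · simp only
    rw [norm_div, norm_mul, norm_mul, norm_mul, norm_zpow, norm_pow, hx, hy, one_zpow, one_pow,
      mul_one, norm_n_cpow, norm_pow, norm_pow, Complex.norm_intCast, Complex.norm_intCast]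
    have := usq_bound m (m + k + 1) p q hp hq
    unfold B2
    simp only
    calc _ = ((|(m : ℝ)| ^ p)⁻¹ * (|((m + k + 1 : ℤ) : ℝ)| ^ q)⁻¹) * (((k + 1 : ℕ) : ℝ) ^ s.re)⁻¹ := by
          rw [one_div, mul_inv, mul_inv]; ring
      _ ≤ _ := by gcongr
  · simpa using B2_nonneg _ _

theorem Tt_hasSum (p : ℕ) (s : ℂ) (q : ℕ) (x y : ℂ) (hp : 0 < p) (hq : 0 < q) (hs : 1 < s.re)
    (hx : ‖x‖ = 1) (hy : ‖y‖ = 1) : HasSum (Tt p s q x y) (T p s q x y) :=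
  (Tt_summable p s q x y hp hq hs hx hy).hasSum

/-- The full summand on all Weyl chambers, index `((m, k), l)` with `n = k + 1`. -/
noncomputable def Phi (p q a b c : ℕ) (s : ℂ) (t : (ℤ × ℕ) × ℤ) : ℂ :=
  I ^ (t.2 + 2 * t.1.1 + 3 * ((t.1.2 : ℤ) + 1)) /
    ((t.2 : ℂ) ^ p * (t.1.1 : ℂ) ^ q * (((t.1.2 + 1 : ℕ) : ℂ)) ^ s *
      ((t.2 + t.1.1 : ℤ) : ℂ) ^ a * ((t.1.1 + t.1.2 + 1 : ℤ) : ℂ) ^ b *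
      ((t.2 + t.1.1 + t.1.2 + 1 : ℤ) : ℂ) ^ c)

theorem Phi_summable (p q a b c : ℕ) (hp : 0 < p) (hq : 0 < q) (ha : 0 < a)
    (hb : 0 < b) (s : ℂ) (hs : 1 < s.re) : Summable (Phi p q a b c s) := by
  apply Summable.of_norm_bounded (B3_summable hs)
  rintro ⟨⟨m, k⟩, l⟩
  unfold Phi B3 B2
  simp only
  simp only [norm_div, norm_mul, norm_zpow, norm_pow, Complex.norm_I, one_zpow, norm_n_cpow,
    Complex.norm_intCast]
  have h1 := usq_bound l (l + m) p a hp ha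
  have h2 := usq_bound m (m + k + 1) q b hq hb
  have h3 := inv_abs_le_one (l + m + k + 1) c
  have n1 := usq_nonneg l
  have n2 := usq_nonneg (l + m)
  have n3 := usq_nonneg m
  have n4 := usq_nonneg (m + k + 1)
  calc _ = ((|(l : ℝ)| ^ p)⁻¹ * (|((l + m : ℤ) : ℝ)| ^ a)⁻¹) *
        (((|(m : ℝ)| ^ q)⁻¹ * (|((m + k + 1 : ℤ) : ℝ)| ^ b)⁻¹) * (((k + 1 : ℕ) : ℝ) ^ s.re)⁻¹) *
        (|((l + m + k + 1 : ℤ) : ℝ)| ^ c)⁻¹ := by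
        simp only [one_div, mul_inv]; ring
    _ ≤ ((usq l + usq (l + m)) * ((usq m + usq (m + k + 1)) * (((k + 1 : ℕ) : ℝ) ^ s.re)⁻¹)) * 1 := by
        gcongr
    _ = _ := by ring

theorem norm_negI : ‖-I‖ = 1 := by simp

theorem norm_neg1 : ‖(-1 : ℂ)‖ = 1 := by simp

/-- pointwise version of `J3` -/
noncomputable def J3t (p q a b c : ℕ) (s : ℂ) (t : ℤ × ℕ) : ℂ :=
  (-1 : ℂ) ^ p * ∑ j ∈ range (p + 1), (-1 : ℂ) ^ j * LamI j *
      ∑ ω ∈ range (p - j + 1),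
        (Nat.choose (ω + a - 1) ω : ℂ) * (Nat.choose (p + c - j - ω - 1) (c - 1) : ℂ) *
          Tt (q + a + ω) s (p + b + c - j - ω) (-1) (-Complex.I) t +
  (-1 : ℂ) ^ (p + a) * ∑ j ∈ range (c + 1), LamI j *
      ∑ ω ∈ range (c - j + 1),
        (Nat.choose (ω + a - 1) ω : ℂ) * (Nat.choose (p + c - j - ω - 1) (p - 1) : ℂ) *
          Tt q (s + a + ω) (p + b + c - j - ω) Complex.I (-1) t +
  (-1 : ℂ) ^ p * ∑ j ∈ range (a + 1), LamI j *
      ∑ ω ∈ range p,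
        (Nat.choose (ω + a - j) ω : ℂ) * (Nat.choose (p + c - 2 - ω) (c - 1) : ℂ) *
          Tt (q + a - j + ω + 1) s (p + b + c - 1 - ω) Complex.I (-Complex.I) t +
  (-1 : ℂ) ^ (p + a) * ∑ j ∈ range (a + 1), (-1 : ℂ) ^ j * LamI j *
      ∑ ω ∈ range c,
        (Nat.choose (ω + a - j) ω : ℂ) * (Nat.choose (p + c - 2 - ω) (p - 1) : ℂ) *
          Tt q (s + ((a - j : ℕ) : ℂ) + ω + 1) (p + b + c - 1 - ω) Complex.I (-Complex.I) t

theorem J3_hasSum (p q a b c : ℕ) (hp : 0 < p) (hq : 0 < q) (ha : 0 < a)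
    (hb : 0 < b) (hc : 0 < c) (s : ℂ) (hs : 1 < s.re) :
    HasSum (J3t p q a b c s) (J3 p q a b c s) := by
  unfold J3
  refine HasSum.add (HasSum.add (HasSum.add ?_ ?_) ?_) ?_
  · refine HasSum.mul_left _ (hasSum_sum fun j hj => HasSum.mul_left _ (hasSum_sum fun ω hω =>
      HasSum.mul_left _ (Tt_hasSum _ _ _ _ _ ?_ ?_ ?_ ?_ ?_)))
    all_goals simp only [Finset.mem_range] at hj hω
    · omega
    · omega
    · exact hs
    · simp
    · simp
  · refine HasSum.mul_left _ (hasSum_sum fun j hj => HasSum.mul_left _ (hasSum_sum fun ω hω =>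
      HasSum.mul_left _ (Tt_hasSum _ _ _ _ _ ?_ ?_ ?_ ?_ ?_)))
    all_goals simp only [Finset.mem_range] at hj hω
    · omega
    · omega
    · have : (0 : ℝ) ≤ a := Nat.cast_nonneg a
      have : (0 : ℝ) ≤ ω := Nat.cast_nonneg ω
      simp; linarith
    · simp
    · simp
  · refine HasSum.mul_left _ (hasSum_sum fun j hj => HasSum.mul_left _ (hasSum_sum fun ω hω =>
      HasSum.mul_left _ (Tt_hasSum _ _ _ _ _ ?_ ?_ ?_ ?_ ?_)))
    all_goals simp only [Finset.mem_range] at hj hω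
    · omega
    · omega
    · exact hs
    · simp
    · simp
  · refine HasSum.mul_left _ (hasSum_sum fun j hj => HasSum.mul_left _ (hasSum_sum fun ω hω =>
      HasSum.mul_left _ (Tt_hasSum _ _ _ _ _ ?_ ?_ ?_ ?_ ?_)))
    all_goals simp only [Finset.mem_range] at hj hω
    · omega
    · omega
    · have : (0 : ℝ) ≤ (a - j : ℕ) := Nat.cast_nonneg _
      have : (0 : ℝ) ≤ ω := Nat.cast_nonneg ω
      simp only [add_re, natCast_re, one_re]; linarith
    · simp
    · simp

theorem w_neg1_z (m : ℤ) : (-1 : ℂ) ^ m = I ^ (2 * m) := by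
  rw [zpow_mul]; congr 1; exact_mod_cast I_sq.symm

theorem w_neg1_n (k : ℕ) : (-1 : ℂ) ^ k = I ^ (2 * (k : ℤ)) := by
  rw [← w_neg1_z]; simp

theorem w_negI_n (k : ℕ) : (-I) ^ k = I ^ (3 * (k : ℤ)) := by
  rw [zpow_mul, zpow_natCast]; congr 1
  exact_mod_cast I_pow_three.symm

theorem inner_eq (p q a b c : ℕ) (hp : 0 < p) (hq : 0 < q) (ha : 0 < a)
    (hb : 0 < b) (hc : 0 < c) (s : ℂ) (hs : 1 < s.re) (t : ℤ × ℕ) :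
    ∑' l, Phi p q a b c s (t, l) = J3t p q a b c s t := by
  obtain ⟨m, k⟩ := t
  by_cases h : m ≠ 0 ∧ m + ((k : ℤ) + 1) ≠ 0
  swap
  · have h0 : ∀ l, Phi p q a b c s ((m, k), l) = 0 := by
      intro l
      unfold Phi
      rw [not_and_or, not_not, not_not] at h
      rcases h with h | h
      · simp [h, hq.ne']
      · rw [← add_assoc] at h
        simp [h, hb.ne']
    have h1 : ∀ P s Q x y, Tt P s Q x y (m, k) = 0 := fun P s Q x y => if_neg h
    simp [h0, J3t, h1]
  have hm : (m : ℂ) ≠ 0 := by exact_mod_cast h.1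
  set N : ℂ := ((m + k + 1 : ℤ) : ℂ) with hNdef
  set n : ℂ := ((k + 1 : ℕ) : ℂ) with hndef
  have hN : N ≠ 0 := by
    rw [hNdef]; rw [← add_assoc] at h; exact_mod_cast h.2
  have hn : n ≠ 0 := by rw [hndef]; exact_mod_cast Nat.succ_ne_zero k
  have hNm : N = m + n := by rw [hNdef, hndef]; push_cast; ring
  have hns : n ^ s ≠ 0 := by rw [Complex.cpow_ne_zero_iff]; exact Or.inl hn
  have hT : ∀ P s Q x y, Tt P s Q x y (m, k) =
      x ^ m * y ^ (k + 1) / ((m : ℂ) ^ P * n ^ s * N ^ Q) := fun P s Q x y => if_pos h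
  have hCS := (main_CS cs_base (p + a + c - 1) 0 (-m) (-(m + k + 1)) (by omega) (by omega) (by omega)
    p a c (by omega)).mul (I ^ (2 * m + 3 * ((k : ℤ) + 1)) / ((m : ℂ) ^ q * n ^ s * N ^ b))
  have hfun : (fun l => Phi p q a b c s ((m, k), l)) = fun l =>
      (I ^ (2 * m + 3 * ((k : ℤ) + 1)) / ((m : ℂ) ^ q * n ^ s * N ^ b)) *
        Ff 0 (-m) (-(m + k + 1)) p a c l := by
    ext l
    unfold Phi Ff
    simp only
    split_ifs with hl
    · rcases hl with rfl | rfl | rfl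
      · simp [hp.ne']
      · simp [ha.ne']
      · rw [show -(m + (k : ℤ) + 1) + m + k + 1 = 0 by ring]
        simp [hc.ne']
    · rw [show l + 2 * m + 3 * ((k : ℤ) + 1) = l + (2 * m + 3 * ((k : ℤ) + 1)) by ring,
        zpow_add₀ I_ne_zero, ← hNdef, ← hndef]
      push_cast
      rw [show (l : ℂ) - -((m : ℂ) + k + 1) = l + m + k + 1 by ring,
        show (l : ℂ) - 0 = l by ring, show (l : ℂ) - -(m : ℂ) = l + m by ring]
      rw [div_mul_div_comm]
      congr 1 <;> ring
  have hsum : Summable (fun l => Phi p q a b c s ((m, k), l)) :=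
    (Phi_summable p q a b c hp hq ha hb s hs).comp_injective (Prod.mk_right_injective (m, k))
  have h1 := CS.of_hasSum hsum.hasSum
  rw [hfun] at h1
  rw [hfun]
  rw [h1.unique hCS]
  have g1 : ((0 : ℤ) : ℂ) - ((-m : ℤ) : ℂ) = m := by push_cast; ring
  have g2 : ((0 : ℤ) : ℂ) - ((-(m + k + 1) : ℤ) : ℂ) = N := by rw [hNdef]; push_cast; ring
  have g3 : ((-m : ℤ) : ℂ) - ((0 : ℤ) : ℂ) = -m := by push_cast; ring
  have g4 : ((-m : ℤ) : ℂ) - ((-(m + k + 1) : ℤ) : ℂ) = n := by rw [hndef]; push_cast; ring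
  have g5 : ((-(m + k + 1) : ℤ) : ℂ) - ((0 : ℤ) : ℂ) = -N := by rw [hNdef]; push_cast; ring
  have g6 : ((-(m + k + 1) : ℤ) : ℂ) - ((-m : ℤ) : ℂ) = -n := by rw [hndef]; push_cast; ring
  unfold Gf
  rw [g1, g2, g3, g4, g5, g6, E1 _ _ _ _ _ hc, E3 _ _ _ _ _ hp, E2 _ _ N hm hn hN hNm _ _ _ hp hc]
  have w1 : (I : ℂ) ^ (2 * m + 3 * ((k : ℤ) + 1)) * I ^ (0 : ℤ) = (-1) ^ m * (-I) ^ (k + 1) := by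
    rw [w_neg1_z, w_negI_n, ← zpow_add₀ I_ne_zero, ← zpow_add₀ I_ne_zero]
    apply I_zpow_congr; push_cast; ring_nf; omega
  have w2 : (I : ℂ) ^ (2 * m + 3 * ((k : ℤ) + 1)) * I ^ (-m) = I ^ m * (-I) ^ (k + 1) := by
    rw [w_negI_n, ← zpow_add₀ I_ne_zero, ← zpow_add₀ I_ne_zero]
    apply I_zpow_congr; push_cast; ring_nf; omega
  have w3 : (I : ℂ) ^ (2 * m + 3 * ((k : ℤ) + 1)) * I ^ (-(m + k + 1)) = I ^ m * (-1) ^ (k + 1) := by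
    rw [w_neg1_n, ← zpow_add₀ I_ne_zero, ← zpow_add₀ I_ne_zero]
    apply I_zpow_congr; push_cast; ring_nf; omega
  unfold J3t
  have rearr : ∀ W D i0 i1 i2 A1 A2 A3 A4 : ℂ, W / D * (i0 * A1 + i1 * (A3 + A4) + i2 * A2) =
      (W * i0) / D * A1 + (W * i2) / D * A2 + (W * i1) / D * A3 + (W * i1) / D * A4 := by
    intros; ring
  rw [rearr, w1, w2, w3]
  simp only [Finset.mul_sum, hT]
  refine congrArg₂ (· + ·) (congrArg₂ (· + ·) (congrArg₂ (· + ·) ?_ ?_) ?_) ?_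
  all_goals refine Finset.sum_congr rfl fun j hj => Finset.sum_congr rfl fun ω hω => ?_
  all_goals simp only [Finset.mem_range] at hj hω
  · rw [show p + b + c - j - ω = b + (p + c - j - ω) by omega]
    simp only [pow_add]
    field_simp
  · rw [show p + b + c - j - ω = b + (p + c - j - ω) by omega, Complex.cpow_add _ _ hn,
      Complex.cpow_add _ _ hn, Complex.cpow_natCast, Complex.cpow_natCast]
    simp only [pow_add]
    field_simp
  · rw [show p + b + c - 1 - ω = b + (p + c - 1 - ω) by omega,
      show q + a - j + ω + 1 = q + (a - j + ω + 1) by omega]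
    simp only [pow_add]
    field_simp
  · rw [show p + b + c - 1 - ω = b + (p + c - 1 - ω) by omega, Complex.cpow_add _ _ hn,
      Complex.cpow_add _ _ hn,  Complex.cpow_add _ _ hn, Complex.cpow_natCast, Complex.cpow_natCast,
      Complex.cpow_one]
    simp only [pow_add]
    field_simp

theorem Phi_tsum (p q a b c : ℕ) (hp : 0 < p) (hq : 0 < q) (ha : 0 < a)
    (hb : 0 < b) (hc : 0 < c) (s : ℂ) (hs : 1 < s.re) :
    ∑' t, Phi p q a b c s t = J3 p q a b c s := by
  rw [(Phi_summable p q a b c hp hq ha hb s hs).tsum_prod,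
    ← (J3_hasSum p q a b c hp hq ha hb hc s hs).tsum_eq]
  exact tsum_congr fun t => inner_eq p q a b c hp hq ha hb hc s hs t

/-- Parametrisation of the twelve Weyl chambers. -/
def gch (u : Fin 12 × (ℕ × ℕ × ℕ)) : (ℤ × ℕ) × ℤ :=
  let x := u.2.1
  let y := u.2.2.1
  let z := u.2.2.2
  match u.1 with
  | 0 => (((y:ℤ)+1, z), (x:ℤ)+1)
  | 1 => (((x:ℤ)+y+2, z), -((x:ℤ)+1))
  | 2 => (((x:ℤ)+1, y+z+1), -((x:ℤ)+y+2))
  | 3 => (((x:ℤ)+1, y), -((x:ℤ)+y+z+3))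
  | 4 => ((-((y:ℤ)+1), y+z+1), (x:ℤ)+y+2)
  | 5 => ((-((y:ℤ)+z+2), y), (x:ℤ)+y+z+3)
  | 6 => ((-((x:ℤ)+y+2), x+y+z+2), (y:ℤ)+1)
  | 7 => ((-((x:ℤ)+y+z+3), x+y+1), (y:ℤ)+z+2)
  | 8 => ((-((x:ℤ)+y+z+3), x), (z:ℤ)+1)
  | 9 => ((-((x:ℤ)+1), x+y+z+2), -((y:ℤ)+1))
  | 10 => ((-((x:ℤ)+1), x+y+1), -((y:ℤ)+z+2))
  | 11 => ((-((x:ℤ)+y+2), x), -((z:ℤ)+1))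

theorem gch_inj : Function.Injective gch := by
  rintro ⟨i, x, y, z⟩ ⟨j, x', y', z'⟩ h
  fin_cases i <;> fin_cases j <;> simp only [gch, Prod.mk.injEq] at h ⊢ <;>
    first
    | omega
    | (refine ⟨trivial, ?_, ?_, ?_⟩ <;> omega)

theorem gch_surj (m l : ℤ) (k : ℕ) (h1 : l ≠ 0) (h2 : m ≠ 0) (h3 : l + m ≠ 0)
    (h4 : m + k + 1 ≠ 0) (h5 : l + m + k + 1 ≠ 0) : ((m, k), l) ∈ Set.range gch := by
  have key : ∀ (i : Fin 12) (x y z : ℤ), 0 ≤ x → 0 ≤ y → 0 ≤ z →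
      gch (i, x.toNat, y.toNat, z.toNat) = ((m, k), l) → ((m, k), l) ∈ Set.range gch :=
    fun i x y z _ _ _ h => ⟨_, h⟩
  rcases lt_or_gt_of_ne h1 with h1 | h1
  · rcases lt_or_gt_of_ne h2 with h2 | h2
    · rcases lt_or_gt_of_ne h4 with h4 | h4
      · refine key 11 k (-m - k - 2) (-l - 1) ?_ ?_ ?_ ?_ <;>
          first | omega | (simp only [gch, Prod.mk.injEq]; omega)
      · rcases lt_or_gt_of_ne h5 with h5 | h5
        · refine key 10 (-m - 1) (k + m) (-l - (k + m) - 2) ?_ ?_ ?_ ?_ <;>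
            first | omega | (simp only [gch, Prod.mk.injEq]; omega)
        · refine key 9 (-m - 1) (-l - 1) (k + m + l) ?_ ?_ ?_ ?_ <;>
            first | omega | (simp only [gch, Prod.mk.injEq]; omega)
    · rcases lt_or_gt_of_ne h3 with h3 | h3
      · rcases lt_or_gt_of_ne h5 with h5 | h5
        · refine key 3 (m - 1) k (-l - m - k - 2) ?_ ?_ ?_ ?_ <;>
            first | omega | (simp only [gch, Prod.mk.injEq]; omega)
        · refine key 2 (m - 1) (-l - m - 1) (k + l + m) ?_ ?_ ?_ ?_ <;>
            first | omega | (simp only [gch, Prod.mk.injEq]; omega)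
      · refine key 1 (-l - 1) (m + l - 1) k ?_ ?_ ?_ ?_ <;>
          first | omega | (simp only [gch, Prod.mk.injEq]; omega)
  · rcases lt_or_gt_of_ne h2 with h2 | h2
    · rcases lt_or_gt_of_ne h3 with h3 | h3
      · rcases lt_or_gt_of_ne h4 with h4 | h4
        · rcases lt_or_gt_of_ne h5 with h5 | h5
          · refine key 8 k (-m - k - l - 2) (l - 1) ?_ ?_ ?_ ?_ <;>
              first | omega | (simp only [gch, Prod.mk.injEq]; omega)
          · refine key 7 (-m - l - 1) (k + m + l) (-m - k - 2) ?_ ?_ ?_ ?_ <;>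
              first | omega | (simp only [gch, Prod.mk.injEq]; omega)
        · refine key 6 (-m - l - 1) (l - 1) (k + m) ?_ ?_ ?_ ?_ <;>
            first | omega | (simp only [gch, Prod.mk.injEq]; omega)
      · rcases lt_or_gt_of_ne h4 with h4 | h4
        · refine key 5 (l + m - 1) k (-m - k - 2) ?_ ?_ ?_ ?_ <;>
            first | omega | (simp only [gch, Prod.mk.injEq]; omega)
        · refine key 4 (l + m - 1) (-m - 1) (k + m) ?_ ?_ ?_ ?_ <;>
            first | omega | (simp only [gch, Prod.mk.injEq]; omega)
    · refine key 0 (l - 1) (m - 1) k ?_ ?_ ?_ ?_ <;>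
        first | omega | (simp only [gch, Prod.mk.injEq]; omega)

theorem Phi_support (p q a b c : ℕ) (hp : 0 < p) (hq : 0 < q) (ha : 0 < a)
    (hb : 0 < b) (hc : 0 < c) (s : ℂ) :
    Function.support (Phi p q a b c s) ⊆ Set.range gch := by
  rintro ⟨⟨m, k⟩, l⟩ h
  rw [Function.mem_support] at h
  unfold Phi at h
  refine gch_surj m l k ?_ ?_ ?_ ?_ ?_ <;> intro h0 <;> apply h
  · simp [h0, hp.ne']
  · simp [h0, hq.ne']
  · have : ((l + m : ℤ) : ℂ) = 0 := by rw [h0]; simp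
    simp [this, ha.ne', -Int.cast_add]
  · have : ((m + k + 1 : ℤ) : ℂ) = 0 := by rw [h0]; simp
    simp [this, hb.ne', -Int.cast_add]
  · have : ((l + m + k + 1 : ℤ) : ℂ) = 0 := by rw [h0]; simp
    simp [this, hc.ne', -Int.cast_add]

theorem Phi_aux (p q a b c : ℕ) (s : ℂ) (m l : ℤ) (k A B C D E N W : ℕ) (e1 e2 e3 e4 e5 : ℤ)
    (d1 : e1 = 1 ∨ e1 = -1) (d2 : e2 = 1 ∨ e2 = -1) (d3 : e3 = 1 ∨ e3 = -1)
    (d4 : e4 = 1 ∨ e4 = -1) (d5 : e5 = 1 ∨ e5 = -1)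
    (h1 : l = e1 * A) (h2 : m = e2 * B) (h3 : l + m = e3 * C) (h4 : m + k + 1 = e4 * D)
    (h5 : l + m + k + 1 = e5 * E) (h6 : k + 1 = N)
    (hW : (4:ℤ) ∣ (l + 2 * m + 3 * ((k:ℤ) + 1)) - (W : ℕ)) :
    Phi p q a b c s ((m, k), l) =
      ((e1:ℂ) ^ p * (e2:ℂ) ^ q * (e3:ℂ) ^ a * (e4:ℂ) ^ b * (e5:ℂ) ^ c) *
        (I ^ W / ((A:ℂ) ^ (p:ℂ) * (B:ℂ) ^ (q:ℂ) * (N:ℂ) ^ s * (C:ℂ) ^ (a:ℂ) *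
          (D:ℂ) ^ (b:ℂ) * (E:ℂ) ^ (c:ℂ))) := by
  have inv : ∀ (e : ℤ) (n : ℕ), (e = 1 ∨ e = -1) → ((e:ℂ) ^ n)⁻¹ = (e:ℂ) ^ n := by
    rintro e n (rfl | rfl)
    · simp
    · rw [inv_eq_of_mul_eq_one_right]
      push_cast
      exact neg_one_sq_pow n
  have hI : I ^ (l + 2 * m + 3 * ((k:ℤ) + 1)) = I ^ W := by
    rw [I_zpow_congr hW, zpow_natCast]
  unfold Phi
  simp only []
  rw [hI, h5, h3, h4, h6, h1, h2]
  simp only [Complex.cpow_natCast]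
  push_cast
  simp only [mul_pow, div_eq_mul_inv, mul_inv, inv _ _ d1, inv _ _ d2, inv _ _ d3,
    inv _ _ d4, inv _ _ d5]
  ring

theorem chamber_0 (p q a b c : ℕ) (s : ℂ) :
    ∑' t, Phi p q a b c s (gch (0, t)) = Zlam3 p q s a b c := by
  unfold Zlam3 Z3
  refine tsum_congr ?_
  rintro ⟨x, y, z⟩
  simp only [gch]
  rw [Phi_aux p q a b c s _ _ _ (x + 1) (y + 1) (x + 1 + (y + 1)) (y + 1 + (z + 1)) (x + 1 + (y + 1) + (z + 1)) (z + 1)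
    (x + 1 + 2 * (y + 1) + 3 * (z + 1)) 1 1 1 1 1
    (by simp) (by simp) (by simp) (by simp) (by simp)
    (by push_cast; ring) (by push_cast; ring) (by push_cast; ring) (by push_cast; ring)
    (by push_cast; ring) (by ring) (by push_cast; omega)]
  simp only [Int.cast_one, Int.cast_neg, one_pow, pow_add, one_mul, mul_one]

theorem chamber_1 (p q a b c : ℕ) (s : ℂ) :
    ∑' t, Phi p q a b c s (gch (1, t)) = (-1 : ℂ) ^ (p) * Zlam3 p a s q c b := by
  unfold Zlam3 Z3
  rw [← tsum_mul_left]
  refine tsum_congr ?_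
  rintro ⟨x, y, z⟩
  simp only [gch]
  rw [Phi_aux p q a b c s _ _ _ (x + 1) (x + 1 + (y + 1)) (y + 1) (x + 1 + (y + 1) + (z + 1)) (y + 1 + (z + 1)) (z + 1)
    (x + 1 + 2 * (y + 1) + 3 * (z + 1)) (-1) 1 1 1 1
    (by simp) (by simp) (by simp) (by simp) (by simp)
    (by push_cast; ring) (by push_cast; ring) (by push_cast; ring) (by push_cast; ring)
    (by push_cast; ring) (by ring) (by push_cast; omega)]
  simp only [Int.cast_one, Int.cast_neg, one_pow, pow_add, one_mul, mul_one]
  ring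

theorem chamber_2 (p q a b c : ℕ) (s : ℂ) :
    ∑' t, Phi p q a b c s (gch (2, t)) = (-1 : ℂ) ^ (p + a) * Zlam3 q a c p s b := by
  unfold Zlam3 Z3
  rw [← tsum_mul_left]
  refine tsum_congr ?_
  rintro ⟨x, y, z⟩
  simp only [gch]
  rw [Phi_aux p q a b c s _ _ _ (x + 1 + (y + 1)) (x + 1) (y + 1) (x + 1 + (y + 1) + (z + 1)) (z + 1) (y + 1 + (z + 1))
    (x + 1 + 2 * (y + 1) + 3 * (z + 1)) (-1) 1 (-1) 1 1
    (by simp) (by simp) (by simp) (by simp) (by simp)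
    (by push_cast; ring) (by push_cast; ring) (by push_cast; ring) (by push_cast; ring)
    (by push_cast; ring) (by ring) (by push_cast; omega)]
  simp only [Int.cast_one, Int.cast_neg, one_pow, pow_add, one_mul, mul_one]
  ring

theorem chamber_3 (p q a b c : ℕ) (s : ℂ) :
    ∑' t, Phi p q a b c s (gch (3, t)) = (-1 : ℂ) ^ (p + a + c) * Zlam3 q s c b a p := by
  unfold Zlam3 Z3
  rw [← tsum_mul_left]
  refine tsum_congr ?_
  rintro ⟨x, y, z⟩
  simp only [gch]
  rw [Phi_aux p q a b c s _ _ _ (x + 1 + (y + 1) + (z + 1)) (x + 1) (y + 1 + (z + 1)) (x + 1 + (y + 1)) (z + 1) (y + 1)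
    (x + 1 + 2 * (y + 1) + 3 * (z + 1)) (-1) 1 (-1) 1 (-1)
    (by simp) (by simp) (by simp) (by simp) (by simp)
    (by push_cast; ring) (by push_cast; ring) (by push_cast; ring) (by push_cast; ring)
    (by push_cast; ring) (by ring) (by push_cast; omega)]
  simp only [Int.cast_one, Int.cast_neg, one_pow, pow_add, one_mul, mul_one]
  ring

theorem chamber_4 (p q a b c : ℕ) (s : ℂ) :
    ∑' t, Phi p q a b c s (gch (4, t)) = (-1 : ℂ) ^ (q) * Zlam3 a q b p s c := by
  unfold Zlam3 Z3
  rw [← tsum_mul_left]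
  refine tsum_congr ?_
  rintro ⟨x, y, z⟩
  simp only [gch]
  rw [Phi_aux p q a b c s _ _ _ (x + 1 + (y + 1)) (y + 1) (x + 1) (z + 1) (x + 1 + (y + 1) + (z + 1)) (y + 1 + (z + 1))
    (x + 1 + 2 * (y + 1) + 3 * (z + 1)) 1 (-1) 1 1 1
    (by simp) (by simp) (by simp) (by simp) (by simp)
    (by push_cast; ring) (by push_cast; ring) (by push_cast; ring) (by push_cast; ring)
    (by push_cast; ring) (by ring) (by push_cast; omega)]
  simp only [Int.cast_one, Int.cast_neg, one_pow, pow_add, one_mul, mul_one]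
  ring

theorem chamber_5 (p q a b c : ℕ) (s : ℂ) :
    ∑' t, Phi p q a b c s (gch (5, t)) = (-1 : ℂ) ^ (q + b) * Zlam3 a s b c q p := by
  unfold Zlam3 Z3
  rw [← tsum_mul_left]
  refine tsum_congr ?_
  rintro ⟨x, y, z⟩
  simp only [gch]
  rw [Phi_aux p q a b c s _ _ _ (x + 1 + (y + 1) + (z + 1)) (y + 1 + (z + 1)) (x + 1) (z + 1) (x + 1 + (y + 1)) (y + 1)
    (x + 1 + 2 * (y + 1) + 3 * (z + 1)) 1 (-1) 1 (-1) 1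
    (by simp) (by simp) (by simp) (by simp) (by simp)
    (by push_cast; ring) (by push_cast; ring) (by push_cast; ring) (by push_cast; ring)
    (by push_cast; ring) (by ring) (by push_cast; omega)]
  simp only [Int.cast_one, Int.cast_neg, one_pow, pow_add, one_mul, mul_one]
  ring

theorem chamber_6 (p q a b c : ℕ) (s : ℂ) :
    ∑' t, Phi p q a b c s (gch (6, t)) = (-1 : ℂ) ^ (q + a) * Zlam3 a p b q c s := by
  unfold Zlam3 Z3
  rw [← tsum_mul_left]
  refine tsum_congr ?_
  rintro ⟨x, y, z⟩
  simp only [gch]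
  rw [Phi_aux p q a b c s _ _ _ (y + 1) (x + 1 + (y + 1)) (x + 1) (z + 1) (y + 1 + (z + 1)) (x + 1 + (y + 1) + (z + 1))
    (x + 1 + 2 * (y + 1) + 3 * (z + 1)) 1 (-1) (-1) 1 1
    (by simp) (by simp) (by simp) (by simp) (by simp)
    (by push_cast; ring) (by push_cast; ring) (by push_cast; ring) (by push_cast; ring)
    (by push_cast; ring) (by ring) (by push_cast; omega)]
  simp only [Int.cast_one, Int.cast_neg, one_pow, pow_add, one_mul, mul_one]
  ring

theorem chamber_7 (p q a b c : ℕ) (s : ℂ) :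
    ∑' t, Phi p q a b c s (gch (7, t)) = (-1 : ℂ) ^ (q + a + b) * Zlam3 a c b s p q := by
  unfold Zlam3 Z3
  rw [← tsum_mul_left]
  refine tsum_congr ?_
  rintro ⟨x, y, z⟩
  simp only [gch]
  rw [Phi_aux p q a b c s _ _ _ (y + 1 + (z + 1)) (x + 1 + (y + 1) + (z + 1)) (x + 1) (z + 1) (y + 1) (x + 1 + (y + 1))
    (x + 1 + 2 * (y + 1) + 3 * (z + 1)) 1 (-1) (-1) (-1) 1
    (by simp) (by simp) (by simp) (by simp) (by simp)
    (by push_cast; ring) (by push_cast; ring) (by push_cast; ring) (by push_cast; ring)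
    (by push_cast; ring) (by ring) (by push_cast; omega)]
  simp only [Int.cast_one, Int.cast_neg, one_pow, pow_add, one_mul, mul_one]
  ring

theorem chamber_8 (p q a b c : ℕ) (s : ℂ) :
    ∑' t, Phi p q a b c s (gch (8, t)) = (-1 : ℂ) ^ (q + a + b + c) * Zlam3 s c p a b q := by
  unfold Zlam3 Z3
  rw [← tsum_mul_left]
  refine tsum_congr ?_
  rintro ⟨x, y, z⟩
  simp only [gch]
  rw [Phi_aux p q a b c s _ _ _ (z + 1) (x + 1 + (y + 1) + (z + 1)) (x + 1 + (y + 1)) (y + 1 + (z + 1)) (y + 1) (x + 1)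
    (x + 1 + 2 * (y + 1) + 3 * (z + 1)) 1 (-1) (-1) (-1) (-1)
    (by simp) (by simp) (by simp) (by simp) (by simp)
    (by push_cast; ring) (by push_cast; ring) (by push_cast; ring) (by push_cast; ring)
    (by push_cast; ring) (by ring) (by push_cast; omega)]
  simp only [Int.cast_one, Int.cast_neg, one_pow, pow_add, one_mul, mul_one]
  ring

theorem chamber_9 (p q a b c : ℕ) (s : ℂ) :
    ∑' t, Phi p q a b c s (gch (9, t)) = (-1 : ℂ) ^ (p + q + a) * Zlam3 q p c a b s := by
  unfold Zlam3 Z3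
  rw [← tsum_mul_left]
  refine tsum_congr ?_
  rintro ⟨x, y, z⟩
  simp only [gch]
  rw [Phi_aux p q a b c s _ _ _ (y + 1) (x + 1) (x + 1 + (y + 1)) (y + 1 + (z + 1)) (z + 1) (x + 1 + (y + 1) + (z + 1))
    (x + 1 + 2 * (y + 1) + 3 * (z + 1)) (-1) (-1) (-1) 1 1
    (by simp) (by simp) (by simp) (by simp) (by simp)
    (by push_cast; ring) (by push_cast; ring) (by push_cast; ring) (by push_cast; ring)
    (by push_cast; ring) (by ring) (by push_cast; omega)]
  simp only [Int.cast_one, Int.cast_neg, one_pow, pow_add, one_mul, mul_one]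
  ring

theorem chamber_10 (p q a b c : ℕ) (s : ℂ) :
    ∑' t, Phi p q a b c s (gch (10, t)) = (-1 : ℂ) ^ (p + q + a + c) * Zlam3 q b c s p a := by
  unfold Zlam3 Z3
  rw [← tsum_mul_left]
  refine tsum_congr ?_
  rintro ⟨x, y, z⟩
  simp only [gch]
  rw [Phi_aux p q a b c s _ _ _ (y + 1 + (z + 1)) (x + 1) (x + 1 + (y + 1) + (z + 1)) (y + 1) (z + 1) (x + 1 + (y + 1))
    (x + 1 + 2 * (y + 1) + 3 * (z + 1)) (-1) (-1) (-1) 1 (-1)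
    (by simp) (by simp) (by simp) (by simp) (by simp)
    (by push_cast; ring) (by push_cast; ring) (by push_cast; ring) (by push_cast; ring)
    (by push_cast; ring) (by ring) (by push_cast; omega)]
  simp only [Int.cast_one, Int.cast_neg, one_pow, pow_add, one_mul, mul_one]
  ring

theorem chamber_11 (p q a b c : ℕ) (s : ℂ) :
    ∑' t, Phi p q a b c s (gch (11, t)) = (-1 : ℂ) ^ (p + q + a + b + c) * Zlam3 s b p q c a := by
  unfold Zlam3 Z3
  rw [← tsum_mul_left]
  refine tsum_congr ?_
  rintro ⟨x, y, z⟩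
  simp only [gch]
  rw [Phi_aux p q a b c s _ _ _ (z + 1) (x + 1 + (y + 1)) (x + 1 + (y + 1) + (z + 1)) (y + 1) (y + 1 + (z + 1)) (x + 1)
    (x + 1 + 2 * (y + 1) + 3 * (z + 1)) (-1) (-1) (-1) (-1) (-1)
    (by simp) (by simp) (by simp) (by simp) (by simp)
    (by push_cast; ring) (by push_cast; ring) (by push_cast; ring) (by push_cast; ring)
    (by push_cast; ring) (by ring) (by push_cast; omega)]
  simp only [Int.cast_one, Int.cast_neg, one_pow, pow_add, one_mul, mul_one]
  ring

theorem Scomb_eq (p q a b c : ℕ) (hp : 0 < p) (hq : 0 < q) (ha : 0 < a)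
    (hb : 0 < b) (hc : 0 < c) (s : ℂ) (hs : 1 < s.re) :
    Scomb Zlam3 p q a b c s = ∑' t, Phi p q a b c s t := by
  rw [← gch_inj.tsum_eq (Phi_support p q a b c hp hq ha hb hc s)]
  have hsum : Summable (fun u => Phi p q a b c s (gch u)) :=
    (Phi_summable p q a b c hp hq ha hb s hs).comp_injective gch_inj
  rw [hsum.tsum_prod, tsum_fintype]
  simp only [Fin.sum_univ_succ, Fin.sum_univ_zero]
  unfold Scomb
  rw [← chamber_0, ← chamber_1, ← chamber_2, ← chamber_3, ← chamber_4, ← chamber_5,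
    ← chamber_6, ← chamber_7, ← chamber_8, ← chamber_9, ← chamber_10, ← chamber_11]
  simp only [add_zero, add_assoc]
  rfl

/-- Functional relation for `ζ₃(·,λ₃∨;SU(4))`
(Theorem 7.3, second relation, of Komori–Matsumoto–Tsumura). -/
theorem functional_relation_SU4_lam3 (p q a b c : ℕ) (hp : 0 < p) (hq : 0 < q) (ha : 0 < a)
    (hb : 0 < b) (hc : 0 < c) (s : ℂ) (hs : 1 < s.re) :
    Scomb Zlam3 p q a b c s = J3 p q a b c s := by
  rw [Scomb_eq p q a b c hp hq ha hb hc s hs]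
  exact Phi_tsum p q a b c hp hq ha hb hc s hs
end

section
/- Σ over integers l, m, n ≥ 1 with l ≡ n (mod 2) of 1 / (l² m³ n³ (l+m)³ (m+n)³ (l+m+n)³) = (17π⁸/688128)·ζ(9) + (150461π⁶/10321920)·ζ(11) + (2365283π⁴/491520)·ζ(13) − (32112653π²/196608)·ζ(15) + (36995525/32768)·ζ(17). -/
open Complex Real

namespace SO6

lemma hs_congr {ι : Type*} {f g : ι → ℝ} {s t : ℝ} (h : HasSum f s) (hf : ∀ x, g x = f x)
    (hs : t = s) : HasSum g t := by
  subst hs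
  rwa [funext hf]

lemma b5 : bernoulli' 5 = 0 := bernoulli'_eq_zero_of_odd (by decide) (by norm_num)
lemma b7 : bernoulli' 7 = 0 := bernoulli'_eq_zero_of_odd (by decide) (by norm_num)
lemma b6 : bernoulli' 6 = 1 / 42 := by
  rw [bernoulli'_def]
  norm_num [Finset.sum_range_succ, b5, Nat.choose]
lemma b8 : bernoulli' 8 = - 1 / 30 := by
  rw [bernoulli'_def]
  norm_num [Finset.sum_range_succ, b5, b6, b7, Nat.choose]

lemma tele : HasSum (fun n : ℕ => ((n : ℝ) + 1)⁻¹ - (n : ℝ)⁻¹) 0 := by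
  have hs : Summable (fun n : ℕ => ((n : ℝ) + 1)⁻¹ - (n : ℝ)⁻¹) := by
    rw [← summable_nat_add_iff 1]
    have h1 : Summable (fun n : ℕ => 1 / ((n : ℝ)) ^ 2) :=
      Real.summable_one_div_nat_pow.mpr (by norm_num)
    have h2 := (summable_nat_add_iff 1).mpr h1
    refine Summable.of_norm_bounded h2 (fun n => ?_)
    rw [Real.norm_eq_abs, abs_le]
    push_cast
    have hn : (0 : ℝ) < (n : ℝ) + 1 := by positivity
    have hn2 : (0 : ℝ) < (n : ℝ) + 1 + 1 := by positivity
    have e : ((n : ℝ) + 1 + 1)⁻¹ - ((n : ℝ) + 1)⁻¹ = - (1 / (((n : ℝ) + 1) * ((n : ℝ) + 1 + 1))) := by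
      field_simp; ring
    rw [e]
    constructor
    · apply neg_le_neg
      apply one_div_le_one_div_of_le (by positivity)
      nlinarith
    · have : 0 ≤ 1 / (((n : ℝ) + 1) * ((n : ℝ) + 1 + 1)) := by positivity
      have : 0 ≤ 1 / (((n : ℝ) + 1) ^ 2) := by positivity
      linarith
  rw [hs.hasSum_iff_tendsto_nat]
  have : ∀ n : ℕ, ∑ i ∈ Finset.range n, (((i : ℝ) + 1)⁻¹ - (i : ℝ)⁻¹) = (n : ℝ)⁻¹ := by
    intro n
    have := Finset.sum_range_sub (fun i : ℕ => (i : ℝ)⁻¹) n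
    simpa using this
  simp_rw [this]
  exact tendsto_inv_atTop_nhds_zero_nat (𝕜 := ℝ)

lemma teleZ : HasSum (fun n : ℤ => ((n : ℝ) + 1)⁻¹ - (n : ℝ)⁻¹) 0 := by
  have := HasSum.of_nat_of_neg_add_one (f := fun n : ℤ => ((n : ℝ) + 1)⁻¹ - (n : ℝ)⁻¹)
    (m := 0) (m' := 0) (by simpa using tele) ?_
  · simpa using this
  · convert tele using 2 with n
    push_cast
    have : (-((n : ℝ) + 1) + 1) = -n := by ring
    rw [this, inv_neg, inv_neg]; ring

lemma shiftH {f : ℤ → ℝ} {s : ℝ} (h : HasSum f s) (p : ℤ) : HasSum (fun k => f (k - p)) s :=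
  (Equiv.subRight p).hasSum_iff.mpr h

lemma J1n (p : ℕ) : HasSum (fun k : ℤ => ((k : ℝ) + p)⁻¹ - (k : ℝ)⁻¹) 0 := by
  induction p with
  | zero => simp
  | succ p ih =>
    have h := (shiftH teleZ (-p)).add ih
    simp only [add_zero] at h
    convert h using 2 with k
    push_cast
    ring_nf

lemma J1 (p q : ℤ) : HasSum (fun k : ℤ => ((k : ℝ) - p)⁻¹ - ((k : ℝ) - q)⁻¹) 0 := by
  have main : ∀ (p q : ℤ), p ≤ q → 
      HasSum (fun k : ℤ => ((k : ℝ) - p)⁻¹ - ((k : ℝ) - q)⁻¹) 0 := by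
    intro p q h
    obtain ⟨r, rfl⟩ := Int.le.dest h
    have h := shiftH (J1n r) (p + r)
    convert h using 2 with k
    push_cast
    ring_nf
  rcases le_total p q with h | h
  · exact main p q h
  · have := (main q p h).neg
    simpa using this

lemma evenZ {j : ℕ} (hj : Even j) {z : ℝ} (hj0 : j ≠ 0)
    (h : HasSum (fun n : ℕ => 1 / (n : ℝ) ^ j) z) :
    HasSum (fun k : ℤ => ((k : ℝ) ^ j)⁻¹) (2 * z) := by
  rw [two_mul]
  simp only [one_div] at h
  refine HasSum.of_nat_of_neg_add_one (by simpa using h) ?_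
  have := (hasSum_nat_add_iff' 1).mpr h
  simp [hj0] at this
  refine hs_congr this (fun n => ?_) rfl
  push_cast
  rw [hj.neg_pow]

lemma oddZ {j : ℕ} (hj : Even j) {z : ℝ}
    (h : HasSum (fun n : ℕ => 1 / (n : ℝ) ^ j) z) :
    HasSum (fun k : ℤ => ((2 * (k : ℝ) + 1) ^ j)⁻¹) (2 * (z * (1 - (2 ^ j)⁻¹))) := by
  simp only [one_div] at h
  have he : HasSum (fun n : ℕ => ((((2 * n : ℕ) : ℝ)) ^ j)⁻¹) ((2 ^ j)⁻¹ * z) := by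
    refine hs_congr (h.mul_left _) (fun n => ?_) rfl
    push_cast
    rw [mul_pow, mul_inv]
  have hs : Summable (fun n : ℕ => ((((2 * n + 1 : ℕ) : ℝ)) ^ j)⁻¹) :=
    h.summable.comp_injective (i := fun n : ℕ => 2 * n + 1) (by intro a b; simp)
  have h3 := HasSum.even_add_odd (f := fun n : ℕ => ((n : ℝ) ^ j)⁻¹) he hs.hasSum
  have h4 := h3.unique h
  have h5 : HasSum (fun n : ℕ => ((((2 * n + 1 : ℕ) : ℝ)) ^ j)⁻¹) (z * (1 - (2 ^ j)⁻¹)) := by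
    convert hs.hasSum using 1
    linarith
  rw [two_mul]
  refine HasSum.of_nat_of_neg_add_one (by simpa using h5) ?_
  convert h5 using 2 with n
  push_cast
  rw [← hj.neg_pow]
  ring_nf

lemma oddpow {j : ℕ} (hj : Odd j) (h1 : 1 < j) : HasSum (fun k : ℤ => ((k : ℝ) ^ j)⁻¹) 0 := by
  have hs : Summable (fun k : ℤ => ((k : ℝ) ^ j)⁻¹) := by
    simpa using (Real.summable_one_div_int_pow (p := j)).mpr h1
  have h := hs.hasSum
  have h2 := (Equiv.neg ℤ).hasSum_iff.mpr h
  have h3 := h2.unique (f := (fun k : ℤ => ((k : ℝ) ^ j)⁻¹) ∘ (Equiv.neg ℤ)) (a₂ := - ∑' k : ℤ, ((k : ℝ) ^ j)⁻¹) (by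
    refine hs_congr h.neg (fun k => ?_) rfl
    simp [hj.neg_pow, inv_neg])
  have h4 : ∑' k : ℤ, ((k : ℝ) ^ j)⁻¹ = 0 := by linarith
  rwa [h4] at h

lemma z2 : HasSum (fun n : ℕ => 1 / (n : ℝ) ^ 2) (π ^ 2 / 6) := hasSum_zeta_two
lemma z4 : HasSum (fun n : ℕ => 1 / (n : ℝ) ^ 4) (π ^ 4 / 90) := hasSum_zeta_four
lemma z6 : HasSum (fun n : ℕ => 1 / (n : ℝ) ^ 6) (π ^ 6 / 945) := by
  have h := hasSum_zeta_nat (k := 3) (by norm_num)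
  convert h using 1
  have : bernoulli (2 * 3) = 1 / 42 := by
    rw [bernoulli_eq_bernoulli'_of_ne_one (by norm_num)]
    exact b6
  rw [this]
  norm_num [Nat.factorial]
  ring
lemma z8 : HasSum (fun n : ℕ => 1 / (n : ℝ) ^ 8) (π ^ 8 / 9450) := by
  have h := hasSum_zeta_nat (k := 4) (by norm_num)
  convert h using 1
  have : bernoulli (2 * 4) = - 1 / 30 := by
    rw [bernoulli_eq_bernoulli'_of_ne_one (by norm_num)]
    exact b8
  rw [this]
  norm_num [Nat.factorial]
  ring

/-- Sums of `(k^j)⁻¹` over `ℤ`. -/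
lemma Z2 : HasSum (fun k : ℤ => ((k : ℝ) ^ 2)⁻¹) (π ^ 2 / 3) := by
  convert evenZ (by decide) (by norm_num) z2 using 1; ring
lemma Z4 : HasSum (fun k : ℤ => ((k : ℝ) ^ 4)⁻¹) (π ^ 4 / 45) := by
  convert evenZ (by decide) (by norm_num) z4 using 1; ring
lemma Z6 : HasSum (fun k : ℤ => ((k : ℝ) ^ 6)⁻¹) (2 * π ^ 6 / 945) := by
  convert evenZ (by decide) (by norm_num) z6 using 1; ring
lemma Z8 : HasSum (fun k : ℤ => ((k : ℝ) ^ 8)⁻¹) (π ^ 8 / 4725) := by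
  convert evenZ (by decide) (by norm_num) z8 using 1; ring

/-- sums of `n^{-j}`, `n = l - 2 b`, `l` even. -/
lemma nEven {j : ℕ} {s : ℝ} (h : HasSum (fun k : ℤ => ((k : ℝ) ^ j)⁻¹) s) (c : ℤ) :
    HasSum (fun b : ℤ => ((((2 * c : ℤ) : ℝ) - 2 * b) ^ j)⁻¹) ((2 ^ j)⁻¹ * s) := by
  have h1 := ((Equiv.subLeft c).hasSum_iff.mpr h).mul_left ((2 : ℝ) ^ j)⁻¹
  refine hs_congr h1 (fun b => ?_) rfl
  simp only [Function.comp, Equiv.subLeft_apply]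
  push_cast
  rw [← mul_inv, ← mul_pow]
  ring_nf

lemma nOdd {j : ℕ} {s : ℝ} (h : HasSum (fun k : ℤ => ((2 * (k : ℝ) + 1) ^ j)⁻¹) s) (c : ℤ) :
    HasSum (fun b : ℤ => ((((2 * c + 1 : ℤ) : ℝ) - 2 * b) ^ j)⁻¹) s := by
  have h1 := ((Equiv.subLeft c).hasSum_iff.mpr h)
  refine hs_congr h1 (fun b => ?_) rfl
  simp only [Function.comp, Equiv.subLeft_apply]
  push_cast
  ring_nf

lemma delta (p : ℤ) : HasSum (fun k : ℤ => if k = p then (1 : ℝ) else 0) 1 := hasSum_ite_eq p 1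

lemma deltaSq (a : ℤ) : HasSum (fun k : ℤ => if k ^ 2 = a ^ 2 then (1 : ℝ) else 0)
    (2 - (if a = 0 then 1 else 0)) := by
  by_cases ha : a = 0
  · subst ha
    simp only [if_true]
    convert delta 0 using 2 with k
    · simp
    · norm_num
  · refine hs_congr ((delta a).add (delta (-a))) (fun k => ?_) ?_
    · simp only [sq_eq_sq_iff_eq_or_eq_neg]
      by_cases h1 : k = a
      · have : ¬ a = -a := by omega
        simp [h1, this]
      · by_cases h2 : k = -a <;> simp [h1, h2]
        intro h; omega
    · simp [ha]; norm_num

noncomputable def dl (a : ℤ) : ℝ := if a = 0 then 1 else 0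
noncomputable def dq (a k : ℤ) : ℝ := if k ^ 2 = a ^ 2 then 1 else 0

lemma hdq (a : ℤ) : HasSum (fun k : ℤ => dq a k) (2 - dl a) := deltaSq a

noncomputable def S1 (a : ℤ) : ℝ := ((a : ℝ) ^ 2)⁻¹ / 2 + dl a * (π ^ 2 / 3)
noncomputable def S2 (a : ℤ) : ℝ := π ^ 2 / 6 * ((a : ℝ) ^ 2)⁻¹ - 3 / 8 * ((a : ℝ) ^ 4)⁻¹ + dl a * (π ^ 4 / 45)
noncomputable def S3 (a : ℤ) : ℝ := 5 / 16 * ((a : ℝ) ^ 6)⁻¹ - π ^ 2 / 8 * ((a : ℝ) ^ 4)⁻¹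
  + dl a * (2 * π ^ 6 / 945)

lemma cases3 (a k : ℤ) : (k = a) ∨ (k = -a) ∨ ((k : ℝ) - a ≠ 0 ∧ (k : ℝ) + a ≠ 0 ∧
    (k : ℝ) ^ 2 - a ^ 2 ≠ 0 ∧ k ^ 2 ≠ a ^ 2) := by
  by_cases h1 : k = a
  · exact Or.inl h1
  by_cases h2 : k = -a
  · exact Or.inr (Or.inl h2)
  right; right
  have e1 : (k : ℝ) - a ≠ 0 := by
    intro h; apply h1; have : (k : ℝ) = a := by linarith
    exact_mod_cast this
  have e2 : (k : ℝ) + a ≠ 0 := by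
    intro h; apply h2; have : (k : ℝ) = -a := by linarith
    exact_mod_cast this
  have e3 : (k : ℝ) ^ 2 - a ^ 2 ≠ 0 := by
    have : (k : ℝ) ^ 2 - a ^ 2 = (k - a) * (k + a) := by ring
    rw [this]; exact mul_ne_zero e1 e2
  refine ⟨e1, e2, e3, ?_⟩
  intro h
  apply e3
  have : (k : ℝ) ^ 2 = a ^ 2 := by exact_mod_cast h
  linarith

lemma hS1 (a : ℤ) : HasSum (fun k : ℤ => ((k : ℝ) ^ 2 - a ^ 2)⁻¹) (S1 a) := by
  by_cases ha : a = 0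
  · subst ha
    refine hs_congr Z2 (fun k => by simp) (by simp [S1, dl])
  have ha' : (a : ℝ) ≠ 0 := by exact_mod_cast ha
  have h := ((J1 a (-a)).mul_left (1 / (2 * (a : ℝ)))).add
    ((hdq a).mul_left (1 / (4 * (a : ℝ) ^ 2)))
  refine hs_congr h (fun k => ?_) ?_
  · rcases cases3 a k with rfl | rfl | ⟨h1, h2, h3, h4⟩
    · simp [dq]; field_simp; ring
    · simp [dq]; field_simp; ring
    · simp only [dq, h4, if_false]; push_cast; rw [sub_neg_eq_add]; field_simp; ring
  · simp [S1, dl, ha]; field_simp; ring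

lemma hS2 (a : ℤ) : HasSum (fun k : ℤ => (((k : ℝ) ^ 2 - a ^ 2) ^ 2)⁻¹) (S2 a) := by
  by_cases ha : a = 0
  · subst ha
    refine hs_congr Z4 (fun k => by simp [← pow_mul]) (by simp [S2, dl])
  have ha' : (a : ℝ) ≠ 0 := by exact_mod_cast ha
  have h := ((((shiftH Z2 a).add (shiftH Z2 (-a))).mul_left (1 / (4 * (a : ℝ) ^ 2))).add
    ((hS1 a).mul_left (-1 / (2 * (a : ℝ) ^ 2)))).add
    ((hdq a).mul_left (-1 / (16 * (a : ℝ) ^ 4)))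
  refine hs_congr h (fun k => ?_) ?_
  · rcases cases3 a k with rfl | rfl | ⟨h1, h2, h3, h4⟩
    · simp [dq]; field_simp; ring
    · simp [dq]; field_simp; ring
    · simp only [dq, h4, if_false]; push_cast; rw [sub_neg_eq_add]; field_simp; ring
  · simp [S1, S2, dl, ha]; field_simp; ring

lemma hS3 (a : ℤ) : HasSum (fun k : ℤ => (((k : ℝ) ^ 2 - a ^ 2) ^ 3)⁻¹) (S3 a) := by
  by_cases ha : a = 0
  · subst ha
    refine hs_congr Z6 (fun k => by simp [← pow_mul]) (by simp [S3, dl])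
  have ha' : (a : ℝ) ≠ 0 := by exact_mod_cast ha
  have Z3 := oddpow (j := 3) (by decide) (by norm_num)
  have h := ((((shiftH Z3 a).sub (shiftH Z3 (-a))).mul_left (1 / (8 * (a : ℝ) ^ 3))).add
    ((hS2 a).mul_left (-3 / (4 * (a : ℝ) ^ 2)))).add
    ((hdq a).mul_left (1 / (64 * (a : ℝ) ^ 6)))
  refine hs_congr h (fun k => ?_) ?_
  · rcases cases3 a k with rfl | rfl | ⟨h1, h2, h3, h4⟩
    · simp [dq]; field_simp; ring
    · simp [dq]; field_simp; ring
    · simp only [dq, h4, if_false]; push_cast; rw [sub_neg_eq_add]; field_simp; ring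
  · simp [S3, S2, dl, ha]; field_simp; ring

lemma pfE (X A B : ℝ) (h : A ≠ B) :
    (((X - A) * (X - B)) ^ 3)⁻¹ =
      ((A - B) ^ 3)⁻¹ * (((X - A) ^ 3)⁻¹ - ((X - B) ^ 3)⁻¹)
      - 3 * ((A - B) ^ 4)⁻¹ * (((X - A) ^ 2)⁻¹ + ((X - B) ^ 2)⁻¹)
      + 6 * ((A - B) ^ 5)⁻¹ * ((X - A)⁻¹ - (X - B)⁻¹)
      + 10 * ((A - B) ^ 6)⁻¹ * ((if X = A then 1 else 0) + (if X = B then 1 else 0)) := by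
  have hD : A - B ≠ 0 := sub_ne_zero.mpr h
  by_cases h1 : X = A
  · subst h1
    simp [h]; field_simp; ring
  by_cases h2 : X = B
  · subst h2
    obtain ⟨D, rfl⟩ : ∃ D, A = X + D := ⟨A - X, by ring⟩
    have hD' : D ≠ 0 := by simpa using hD
    simp [hD']
    field_simp; ring
  · have e1 : X - A ≠ 0 := sub_ne_zero.mpr h1
    have e2 : X - B ≠ 0 := sub_ne_zero.mpr h2
    simp only [h1, h2, if_false]
    obtain ⟨D, rfl⟩ : ∃ D, A = B + D := ⟨A - B, by ring⟩
    obtain ⟨Y, rfl⟩ : ∃ Y, X = B + D + Y := ⟨X - (B + D), by ring⟩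
    have i1 : B + D + Y - (B + D) = Y := by ring
    have i2 : B + D + Y - B = D + Y := by ring
    have i3 : B + D - B = D := by ring
    rw [i1] at e1
    rw [i2] at e2
    rw [i3] at hD
    simp only [i1, i2, i3]
    field_simp; ring

noncomputable def EE (a b : ℤ) : ℝ :=
  (((a : ℝ) ^ 2 - b ^ 2) ^ 3)⁻¹ * (S3 a - S3 b)
  - 3 * (((a : ℝ) ^ 2 - b ^ 2) ^ 4)⁻¹ * (S2 a + S2 b)
  + 6 * (((a : ℝ) ^ 2 - b ^ 2) ^ 5)⁻¹ * (S1 a - S1 b)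
  + 10 * (((a : ℝ) ^ 2 - b ^ 2) ^ 6)⁻¹ * ((2 - dl a) + (2 - dl b))

lemma hE (a b : ℤ) (h : a ^ 2 ≠ b ^ 2) :
    HasSum (fun k : ℤ => ((((k : ℝ) ^ 2 - a ^ 2) * ((k : ℝ) ^ 2 - b ^ 2)) ^ 3)⁻¹) (EE a b) := by
  have h' : (a : ℝ) ^ 2 ≠ (b : ℝ) ^ 2 := by exact_mod_cast h
  have H := (((((hS3 a).sub (hS3 b)).mul_left (((a : ℝ) ^ 2 - b ^ 2) ^ 3)⁻¹).sub
    (((hS2 a).add (hS2 b)).mul_left (3 * (((a : ℝ) ^ 2 - b ^ 2) ^ 4)⁻¹))).add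
    (((hS1 a).sub (hS1 b)).mul_left (6 * (((a : ℝ) ^ 2 - b ^ 2) ^ 5)⁻¹))).add
    (((hdq a).add (hdq b)).mul_left (10 * (((a : ℝ) ^ 2 - b ^ 2) ^ 6)⁻¹))
  refine hs_congr H (fun k => ?_) rfl
  rw [pfE _ _ _ h']
  congr 2
  simp only [dq]
  have e : ∀ c : ℤ, ((k : ℝ) ^ 2 = (c : ℝ) ^ 2) ↔ k ^ 2 = c ^ 2 := by
    intro c; norm_cast
  simp only [e]


noncomputable def PF0 (l n a b : ℝ) : ℝ :=
    (40) * ((l ^ 9)⁻¹ * (n ^ 8)⁻¹)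
    + (-12) * ((l ^ 11)⁻¹ * (n ^ 6)⁻¹)
    + (24) * ((l ^ 13)⁻¹ * (n ^ 4)⁻¹)
    + (-1124) * ((l ^ 15)⁻¹ * (n ^ 2)⁻¹)
    + (-5 / 16) * ((l ^ 11)⁻¹ * ((a ^ 6)⁻¹ + (b ^ 6)⁻¹))
    + (-25 / 8) * ((l ^ 12)⁻¹ * ((a ^ 5)⁻¹ + (b ^ 5)⁻¹))
    + (-141 / 8) * ((l ^ 13)⁻¹ * ((a ^ 4)⁻¹ + (b ^ 4)⁻¹))
    + (-74) * ((l ^ 14)⁻¹ * ((a ^ 3)⁻¹ + (b ^ 3)⁻¹))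
    + (-517 / 2) * ((l ^ 15)⁻¹ * ((a ^ 2)⁻¹ + (b ^ 2)⁻¹))
    + (-798) * ((l ^ 16)⁻¹ * ((a ^ 1)⁻¹ + (b ^ 1)⁻¹))

noncomputable def PF2 (l n a b : ℝ) : ℝ :=
    (-4) * ((l ^ 9)⁻¹ * (n ^ 6)⁻¹)
    + (4) * ((l ^ 11)⁻¹ * (n ^ 4)⁻¹)
    + (60) * ((l ^ 13)⁻¹ * (n ^ 2)⁻¹)
    + (1 / 8) * ((l ^ 11)⁻¹ * ((a ^ 4)⁻¹ + (b ^ 4)⁻¹))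
    + (5 / 4) * ((l ^ 12)⁻¹ * ((a ^ 3)⁻¹ + (b ^ 3)⁻¹))
    + (7) * ((l ^ 13)⁻¹ * ((a ^ 2)⁻¹ + (b ^ 2)⁻¹))
    + (29) * ((l ^ 14)⁻¹ * ((a ^ 1)⁻¹ + (b ^ 1)⁻¹))

noncomputable def C0 (l : ℝ) : ℝ :=
    (2258) * (l ^ 17)⁻¹ + (-100) * π ^ 2 * (l ^ 15)⁻¹
    + (-1 / 15) * π ^ 4 * (l ^ 13)⁻¹ + (-2 / 945) * π ^ 6 * (l ^ 11)⁻¹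

noncomputable def CH (l : ℝ) : ℝ :=
    (7248) * (l ^ 17)⁻¹ + (-196) * π ^ 2 * (l ^ 15)⁻¹

lemma pf0 (a b : ℝ) (ha : a ≠ 0) (hb : b ≠ 0) (hl : a + b ≠ 0) (hn : a - b ≠ 0) :
    40 * (((a + b) ^ 9)⁻¹ * ((a - b) ^ 8)⁻¹)
    + 5 / 16 * (((a + b) ^ 6)⁻¹ * ((a - b) ^ 5)⁻¹) * ((a ^ 6)⁻¹ - (b ^ 6)⁻¹)
    + 9 / 8 * (((a + b) ^ 7)⁻¹ * ((a - b) ^ 6)⁻¹) * ((a ^ 4)⁻¹ + (b ^ 4)⁻¹)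
    + 3 * (((a + b) ^ 8)⁻¹ * ((a - b) ^ 7)⁻¹) * ((a ^ 2)⁻¹ - (b ^ 2)⁻¹)
    = PF0 (a + b) (a - b) a b := by
  unfold PF0
  field_simp
  ring

lemma pf2 (a b : ℝ) (ha : a ≠ 0) (hb : b ≠ 0) (hl : a + b ≠ 0) (hn : a - b ≠ 0) :
    - 1 / 8 * (((a + b) ^ 6)⁻¹ * ((a - b) ^ 5)⁻¹) * ((a ^ 4)⁻¹ - (b ^ 4)⁻¹)
    - 1 / 2 * (((a + b) ^ 7)⁻¹ * ((a - b) ^ 6)⁻¹) * ((a ^ 2)⁻¹ + (b ^ 2)⁻¹)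
    = PF2 (a + b) (a - b) a b := by
  unfold PF2
  field_simp
  ring

noncomputable def TT (a b : ℤ) : ℝ :=
  ((a : ℝ) - b) * (((a : ℝ) ^ 2 - b ^ 2) ^ 3)⁻¹ * EE a b

lemma TT_eq (a b : ℤ) (hl : a + b ≠ 0) :
    TT a b = PF0 (a + b) (a - b) a b + π ^ 2 * PF2 (a + b) (a - b) a b
      + C0 (a + b) * (dl a + dl b) + CH (a + b) * dl (a - b) := by
  have hl' : (a : ℝ) + b ≠ 0 := by exact_mod_cast hl
  have hsq : (a : ℝ) ^ 2 - b ^ 2 = (a + b) * (a - b) := by ring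
  by_cases hn : a = b
  · subst hn
    have ha : a ≠ 0 := by omega
    have ha' : (a : ℝ) ≠ 0 := by exact_mod_cast ha
    simp [TT, dl, ha, PF0, PF2, CH]
    field_simp
    ring
  have hn' : (a : ℝ) - b ≠ 0 := by
    intro h; apply hn; have : (a : ℝ) = b := by linarith
    exact_mod_cast this
  by_cases ha : a = 0
  · subst ha
    have hb : b ≠ 0 := by omega
    have hb' : (b : ℝ) ≠ 0 := by exact_mod_cast hb
    simp [TT, EE, S1, S2, S3, dl, hb, PF0, PF2, C0]
    field_simp
    ring
  by_cases hb : b = 0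
  · subst hb
    have ha' : (a : ℝ) ≠ 0 := by exact_mod_cast ha
    simp [TT, EE, S1, S2, S3, dl, ha, PF0, PF2, C0]
    field_simp
    ring
  have ha' : (a : ℝ) ≠ 0 := by exact_mod_cast ha
  have hb' : (b : ℝ) ≠ 0 := by exact_mod_cast hb
  have hn2 : a - b ≠ 0 := by omega
  rw [← pf0 _ _ ha' hb' hl' hn', ← pf2 _ _ ha' hb' hl' hn']
  simp only [TT, EE, S1, S2, S3, dl, ha, hb, hn2, if_false]
  rw [hsq]
  generalize ((a : ℝ) ^ 2)⁻¹ = a2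
  generalize ((b : ℝ) ^ 2)⁻¹ = b2
  generalize ((a : ℝ) ^ 4)⁻¹ = a4
  generalize ((b : ℝ) ^ 4)⁻¹ = b4
  generalize ((a : ℝ) ^ 6)⁻¹ = a6
  generalize ((b : ℝ) ^ 6)⁻¹ = b6
  generalize (a : ℝ) + b = l at *
  generalize (a : ℝ) - b = n at *
  field_simp
  ring

lemma abS {j : ℕ} {s : ℝ} (h : HasSum (fun k : ℤ => ((k : ℝ) ^ j)⁻¹) s) (l : ℤ) :
    HasSum (fun b : ℤ => (((l : ℝ) - b) ^ j)⁻¹ + ((b : ℝ) ^ j)⁻¹) (2 * s) := by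
  have h1 := ((Equiv.subLeft l).hasSum_iff.mpr h).add h
  refine hs_congr h1 (fun b => ?_) (by ring)
  simp [Function.comp, Equiv.subLeft_apply]

lemma abS1 (l : ℤ) : HasSum (fun b : ℤ => (((l : ℝ) - b) ^ 1)⁻¹ + ((b : ℝ) ^ 1)⁻¹) 0 := by
  have h1 := J1 0 l
  refine hs_congr h1 (fun b => ?_) rfl
  have : (l : ℝ) - b = - (b - l) := by ring
  rw [this]
  simp only [pow_one, inv_neg, Int.cast_zero, sub_zero]
  ring

set_option maxHeartbeats 2000000 in
lemma sumTT (l : ℤ) (hl : l ≠ 0) (N2 N4 N6 N8 d : ℝ)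
    (n2 : HasSum (fun b : ℤ => (((l : ℝ) - 2 * b) ^ 2)⁻¹) N2)
    (n4 : HasSum (fun b : ℤ => (((l : ℝ) - 2 * b) ^ 4)⁻¹) N4)
    (n6 : HasSum (fun b : ℤ => (((l : ℝ) - 2 * b) ^ 6)⁻¹) N6)
    (n8 : HasSum (fun b : ℤ => (((l : ℝ) - 2 * b) ^ 8)⁻¹) N8)
    (hN : HasSum (fun b : ℤ => dl (l - 2 * b)) d) :
    HasSum (fun b : ℤ => TT (l - b) b) (
      (40) * ((l : ℝ) ^ 9)⁻¹ * N8 + (-12) * ((l : ℝ) ^ 11)⁻¹ * N6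
      + (24) * ((l : ℝ) ^ 13)⁻¹ * N4 + (-1124) * ((l : ℝ) ^ 15)⁻¹ * N2
      + π ^ 2 * ((-4) * ((l : ℝ) ^ 9)⁻¹ * N6
      + (4) * ((l : ℝ) ^ 11)⁻¹ * N4 + (60) * ((l : ℝ) ^ 13)⁻¹ * N2)
      + (-5 / 16) * ((l : ℝ) ^ 11)⁻¹ * (2 * (2 * π ^ 6 / 945))
      + (-141 / 8) * ((l : ℝ) ^ 13)⁻¹ * (2 * (π ^ 4 / 45))
      + (-517 / 2) * ((l : ℝ) ^ 15)⁻¹ * (2 * (π ^ 2 / 3))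
      + π ^ 2 * ((1 / 8) * ((l : ℝ) ^ 11)⁻¹ * (2 * (π ^ 4 / 45))
      + (7) * ((l : ℝ) ^ 13)⁻¹ * (2 * (π ^ 2 / 3)))
      + C0 l * 2 + CH l * d) := by
  have ab1 := abS1 l
  have ab2 := abS Z2 l
  have ab3 := abS (oddpow (j := 3) (by decide) (by norm_num)) l
  have ab4 := abS Z4 l
  have ab5 := abS (oddpow (j := 5) (by decide) (by norm_num)) l
  have ab6 := abS Z6 l
  have hd0 : HasSum (fun b : ℤ => dl b) 1 := delta 0
  have hd1 : HasSum (fun b : ℤ => dl (l - b)) 1 := (Equiv.subLeft l).hasSum_iff.mpr hd0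
  have h := (n8.mul_left ((40) * ((l : ℝ) ^ 9)⁻¹))
  replace h := h.add (n6.mul_left ((-12) * ((l : ℝ) ^ 11)⁻¹))
  replace h := h.add (n4.mul_left ((24) * ((l : ℝ) ^ 13)⁻¹))
  replace h := h.add (n2.mul_left ((-1124) * ((l : ℝ) ^ 15)⁻¹))
  replace h := h.add (ab6.mul_left ((-5 / 16) * ((l : ℝ) ^ 11)⁻¹))
  replace h := h.add (ab5.mul_left ((-25 / 8) * ((l : ℝ) ^ 12)⁻¹))
  replace h := h.add (ab4.mul_left ((-141 / 8) * ((l : ℝ) ^ 13)⁻¹))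
  replace h := h.add (ab3.mul_left ((-74) * ((l : ℝ) ^ 14)⁻¹))
  replace h := h.add (ab2.mul_left ((-517 / 2) * ((l : ℝ) ^ 15)⁻¹))
  replace h := h.add (ab1.mul_left ((-798) * ((l : ℝ) ^ 16)⁻¹))
  replace h := h.add (n6.mul_left (π ^ 2 * (-4) * ((l : ℝ) ^ 9)⁻¹))
  replace h := h.add (n4.mul_left (π ^ 2 * (4) * ((l : ℝ) ^ 11)⁻¹))
  replace h := h.add (n2.mul_left (π ^ 2 * (60) * ((l : ℝ) ^ 13)⁻¹))
  replace h := h.add (ab4.mul_left (π ^ 2 * (1 / 8) * ((l : ℝ) ^ 11)⁻¹))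
  replace h := h.add (ab3.mul_left (π ^ 2 * (5 / 4) * ((l : ℝ) ^ 12)⁻¹))
  replace h := h.add (ab2.mul_left (π ^ 2 * (7) * ((l : ℝ) ^ 13)⁻¹))
  replace h := h.add (ab1.mul_left (π ^ 2 * (29) * ((l : ℝ) ^ 14)⁻¹))
  replace h := h.add ((hd0.add hd1).mul_left (C0 l))
  replace h := h.add (hN.mul_left (CH l))
  refine hs_congr h (fun b => ?_) (by ring)
  rw [TT_eq _ _ (by omega)]
  have e1 : (((l - b : ℤ) : ℝ)) + b = l := by push_cast; ring
  have e2 : (((l - b : ℤ) : ℝ)) - b = l - 2 * b := by push_cast; ring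
  have e3 : l - b - b = l - 2 * b := by ring
  have e4 : (((l - b : ℤ) : ℝ)) = l - b := by push_cast; ring
  rw [e1, e2, e3, e4]
  simp only [PF0, PF2]
  ring

noncomputable def GGe (l : ℝ) : ℝ := - 1 / 10080 * π ^ 8 * (l ^ 9)⁻¹ + 13 / 2520 * π ^ 6 * (l ^ 11)⁻¹
  + 527 / 60 * π ^ 4 * (l ^ 13)⁻¹ - 662 * π ^ 2 * (l ^ 15)⁻¹ + 11764 * (l ^ 17)⁻¹

noncomputable def GGo (l : ℝ) : ℝ := 1 / 10080 * π ^ 8 * (l ^ 9)⁻¹ + 7 / 120 * π ^ 6 * (l ^ 11)⁻¹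
  + 77 / 4 * π ^ 4 * (l ^ 13)⁻¹ - 1960 / 3 * π ^ 2 * (l ^ 15)⁻¹ + 4516 * (l ^ 17)⁻¹

lemma sumTTe (c : ℤ) (hc : c ≠ 0) :
    HasSum (fun b : ℤ => TT (2 * c - b) b) (GGe ((2 * c : ℤ) : ℝ)) := by
  have h := sumTT (2 * c) (by omega) _ _ _ _ 1 (nEven Z2 c) (nEven Z4 c) (nEven Z6 c) (nEven Z8 c)
    (by
      refine hs_congr (delta c) (fun b => ?_) rfl
      have : (2 * c - 2 * b = 0) ↔ b = c := by omega
      simp only [dl, this])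
  refine hs_congr h (fun b => rfl) ?_
  simp only [GGe, C0, CH]
  ring

lemma sumTTo (c : ℤ) :
    HasSum (fun b : ℤ => TT (2 * c + 1 - b) b) (GGo ((2 * c + 1 : ℤ) : ℝ)) := by
  have h := sumTT (2 * c + 1) (by omega) _ _ _ _ 0 (nOdd (oddZ (by decide) z2) c)
    (nOdd (oddZ (by decide) z4) c) (nOdd (oddZ (by decide) z6) c) (nOdd (oddZ (by decide) z8) c)
    (by
      refine hs_congr hasSum_zero (fun b => ?_) rfl
      have : ¬ (2 * c + 1 - 2 * b = 0) := by omega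
      simp only [dl, this, if_false])
  refine hs_congr h (fun b => rfl) ?_
  simp only [GGo, C0, CH]
  ring


noncomputable def P (a b k : ℤ) : ℝ :=
  ((((a : ℝ) ^ 2 - b ^ 2) * (((k : ℝ) ^ 2 - a ^ 2) * ((k : ℝ) ^ 2 - b ^ 2))) ^ 3)⁻¹

lemma bnd (w u v : ℤ) (h : |w| ≤ |u|) : |(w : ℝ) * (((u : ℝ) * v) ^ 3)⁻¹| ≤ ((u : ℝ) ^ 2)⁻¹ := by
  by_cases hu : u = 0
  · subst hu; simp
  by_cases hv : v = 0
  · subst hv; simp; positivity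
  have h' : |(w : ℝ)| ≤ |(u : ℝ)| := by exact_mod_cast h
  have hu1 : (0 : ℝ) < |(u : ℝ)| := by
    rw [abs_pos]; exact_mod_cast hu
  have hv1 : (1 : ℝ) ≤ |(v : ℝ)| := by
    have := Int.one_le_abs hv
    exact_mod_cast this
  rw [abs_mul, abs_inv, abs_pow, abs_mul, ← sq_abs (u : ℝ)]
  have hv3 : (1 : ℝ) ≤ |(v : ℝ)| ^ 3 := one_le_pow₀ hv1
  rw [← div_eq_mul_inv, div_le_iff₀ (by positivity)]
  have : (|(u : ℝ)| ^ 2)⁻¹ * (|(u : ℝ)| * |(v : ℝ)|) ^ 3 = |(u : ℝ)| * |(v : ℝ)| ^ 3 := by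
    field_simp
  rw [this]
  nlinarith

lemma sumI2 : Summable (fun n : ℤ => ((n : ℝ) ^ 2)⁻¹) := Z2.summable

lemma sum3 : Summable (fun x : ℤ × ℤ × ℤ => ((x.1 : ℝ) ^ 2)⁻¹ *
    (((x.2.1 : ℝ) ^ 2)⁻¹ * ((x.2.2 : ℝ) ^ 2)⁻¹)) := by
  have h2 := sumI2.mul_of_nonneg sumI2 (fun n => by simp; positivity) (fun n => by simp; positivity)
  exact sumI2.mul_of_nonneg h2 (fun n => by simp; positivity) (fun n => by simp; positivity)

lemma phi_inj : Function.Injective (fun x : ℤ × ℤ × ℤ => (x.1 + x.2.1, x.2.2 - x.1, x.1 - x.2.1)) := by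
  rintro ⟨a, b, k⟩ ⟨a', b', k'⟩ h
  simp only [Prod.mk.injEq] at h ⊢
  omega

lemma sumB : Summable (fun x : ℤ × ℤ × ℤ =>
    ((((x.1 + x.2.1) * (x.2.2 - x.1) * (x.1 - x.2.1) : ℤ) : ℝ) ^ 2)⁻¹) := by
  refine (sum3.comp_injective phi_inj).congr (fun x => ?_)
  simp only [Function.comp]
  push_cast
  rw [mul_pow, mul_pow, mul_inv, mul_inv, mul_assoc]

lemma P_eq (a b k : ℤ) : P a b k =
    (((((a + b) * (k - a) * (a - b) : ℤ) : ℝ) * (((k + a) * (k + b) * (k - b) : ℤ) : ℝ)) ^ 3)⁻¹ := by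
  unfold P
  push_cast
  ring_nf

lemma sumPlus : Summable (fun x : ℤ × ℤ × ℤ => ((x.1 : ℝ) + x.2.1) * P x.1 x.2.1 x.2.2) := by
  refine Summable.of_norm_bounded sumB (fun x => ?_)
  rcases x with ⟨a, b, k⟩
  simp only
  by_cases h : (k - a) * (a - b) = 0
  · have : P a b k = 0 := by
      rw [P_eq, mul_assoc (a + b), h]; simp
    rw [this]; simp; positivity
  rw [P_eq, Real.norm_eq_abs]
  have := bnd (a + b) ((a + b) * (k - a) * (a - b)) ((k + a) * (k + b) * (k - b)) (by
    rw [mul_assoc, abs_mul]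
    exact le_mul_of_one_le_right (abs_nonneg _) (Int.one_le_abs h))
  push_cast at this ⊢
  exact this

lemma sumMinus : Summable (fun x : ℤ × ℤ × ℤ => ((x.1 : ℝ) - x.2.1) * P x.1 x.2.1 x.2.2) := by
  refine Summable.of_norm_bounded sumB (fun x => ?_)
  rcases x with ⟨a, b, k⟩
  simp only
  by_cases h : (a + b) * (k - a) = 0
  · have : P a b k = 0 := by
      rw [P_eq, h]; simp
    rw [this]; simp; positivity
  rw [P_eq, Real.norm_eq_abs]
  have := bnd (a - b) ((a + b) * (k - a) * (a - b)) ((k + a) * (k + b) * (k - b)) (by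
    rw [abs_mul]
    exact le_mul_of_one_le_left (abs_nonneg _) (Int.one_le_abs h))
  push_cast at this ⊢
  exact this

lemma sumA : Summable (fun x : ℤ × ℤ × ℤ => (x.1 : ℝ) * P x.1 x.2.1 x.2.2) := by
  refine ((sumPlus.add sumMinus).mul_left (1 / 2)).congr (fun x => ?_)
  ring

lemma sumBB : Summable (fun x : ℤ × ℤ × ℤ => (x.2.1 : ℝ) * P x.1 x.2.1 x.2.2) := by
  refine ((sumPlus.sub sumMinus).mul_left (1 / 2)).congr (fun x => ?_)
  ring

lemma sumIf {f : ℤ × ℤ × ℤ → ℝ} (hf : Summable f) (p : ℤ × ℤ × ℤ → Prop) [DecidablePred p] :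
    Summable (fun x => if p x then f x else 0) := by
  refine Summable.of_norm_bounded hf.norm (fun x => ?_)
  split_ifs <;> simp

lemma P_swap12 (a b k : ℤ) : P b a k = - P a b k := by
  unfold P
  rw [← inv_neg]; congr 1; ring

lemma P_swap23 (a b k : ℤ) : P a k b = - P a b k := by
  unfold P
  rw [← inv_neg]; congr 1; ring

lemma P_neg1 (a b k : ℤ) : P (-a) b k = P a b k := by unfold P; push_cast; ring_nf
lemma P_neg2 (a b k : ℤ) : P a (-b) k = P a b k := by unfold P; push_cast; ring_nf
lemma P_neg3 (a b k : ℤ) : P a b (-k) = P a b k := by unfold P; push_cast; ring_nf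

def e12 : ℤ × ℤ × ℤ ≃ ℤ × ℤ × ℤ where
  toFun x := (x.2.1, x.1, x.2.2)
  invFun x := (x.2.1, x.1, x.2.2)
  left_inv _ := rfl
  right_inv _ := rfl

def e23 : ℤ × ℤ × ℤ ≃ ℤ × ℤ × ℤ where
  toFun x := (x.1, x.2.2, x.2.1)
  invFun x := (x.1, x.2.2, x.2.1)
  left_inv _ := rfl
  right_inv _ := rfl

def en1 : ℤ × ℤ × ℤ ≃ ℤ × ℤ × ℤ where
  toFun x := (-x.1, x.2.1, x.2.2)
  invFun x := (-x.1, x.2.1, x.2.2)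
  left_inv _ := by simp
  right_inv _ := by simp

def en2 : ℤ × ℤ × ℤ ≃ ℤ × ℤ × ℤ where
  toFun x := (x.1, -x.2.1, x.2.2)
  invFun x := (x.1, -x.2.1, x.2.2)
  left_inv _ := by simp
  right_inv _ := by simp

def en3 : ℤ × ℤ × ℤ ≃ ℤ × ℤ × ℤ where
  toFun x := (x.1, x.2.1, -x.2.2)
  invFun x := (x.1, x.2.1, -x.2.2)
  left_inv _ := by simp
  right_inv _ := by simp

def esh : ℤ × ℤ × ℤ ≃ ℤ × ℤ × ℤ where
  toFun x := (x.1 - x.2.1, x.2.1, x.2.2)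
  invFun x := (x.1 + x.2.1, x.2.1, x.2.2)
  left_inv _ := by simp
  right_inv _ := by simp

lemma tsum_anti {f : ℤ × ℤ × ℤ → ℝ} (e : ℤ × ℤ × ℤ ≃ ℤ × ℤ × ℤ) (h : ∀ x, f (e x) = - f x) :
    ∑' x, f x = 0 := by
  have h1 := e.tsum_eq f
  simp only [h, tsum_neg] at h1
  linarith

lemma step1 : ∑' x : ℤ × ℤ × ℤ, (if 0 < x.1 + x.2.1 then ((x.1 : ℝ) - x.2.1) * P x.1 x.2.1 x.2.2 else 0)
    = 2 * ∑' x : ℤ × ℤ × ℤ, (if 0 < x.1 + x.2.1 then (x.1 : ℝ) * P x.1 x.2.1 x.2.2 else 0) := by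
  have hA := sumIf sumA (fun x => 0 < x.1 + x.2.1)
  have hB := sumIf sumBB (fun x => 0 < x.1 + x.2.1)
  have h1 : ∑' x : ℤ × ℤ × ℤ, (if 0 < x.1 + x.2.1 then (x.2.1 : ℝ) * P x.1 x.2.1 x.2.2 else 0)
      = - ∑' x : ℤ × ℤ × ℤ, (if 0 < x.1 + x.2.1 then (x.1 : ℝ) * P x.1 x.2.1 x.2.2 else 0) := by
    rw [← e12.tsum_eq, ← tsum_neg]
    refine tsum_congr (fun x => ?_)
    rcases x with ⟨a, b, k⟩
    simp only [e12, Equiv.coe_fn_mk, P_swap12 a b k, add_comm b a]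
    split_ifs <;> ring
  have h2 := hA.tsum_sub hB
  rw [h1] at h2
  rw [two_mul, ← sub_neg_eq_add, ← h2]
  refine tsum_congr (fun x => ?_)
  split_ifs <;> ring

lemma step2 : 2 * ∑' x : ℤ × ℤ × ℤ, (if 0 < x.1 + x.2.1 then (x.1 : ℝ) * P x.1 x.2.1 x.2.2 else 0)
    = 2 * ∑' x : ℤ × ℤ × ℤ, (if |x.2.1| < x.1 then (x.1 : ℝ) * P x.1 x.2.1 x.2.2 else 0) := by
  have hA := sumIf sumA (fun x => 0 < x.1 + x.2.1)
  have hA' := sumIf sumA (fun x => 0 < x.1 - x.2.1)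
  have hC := sumIf sumA (fun x => |x.2.1| < x.1)
  have hD := sumIf sumA (fun x => |x.1| < |x.2.1|)
  have h1 : ∑' x : ℤ × ℤ × ℤ, (if 0 < x.1 - x.2.1 then (x.1 : ℝ) * P x.1 x.2.1 x.2.2 else 0)
      = ∑' x : ℤ × ℤ × ℤ, (if 0 < x.1 + x.2.1 then (x.1 : ℝ) * P x.1 x.2.1 x.2.2 else 0) := by
    rw [← en2.tsum_eq]
    refine tsum_congr (fun x => ?_)
    rcases x with ⟨a, b, k⟩
    simp only [en2, Equiv.coe_fn_mk, P_neg2 a b k, sub_neg_eq_add]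
  have h2 : ∑' x : ℤ × ℤ × ℤ, (if |x.1| < |x.2.1| then (x.1 : ℝ) * P x.1 x.2.1 x.2.2 else 0) = 0 := by
    refine tsum_anti en1 (fun x => ?_)
    rcases x with ⟨a, b, k⟩
    simp only [en1, Equiv.coe_fn_mk, P_neg1 a b k, abs_neg, Int.cast_neg]
    split_ifs <;> ring
  have h3 := hA.tsum_add hA'
  have h4 := (hC.mul_left 2).tsum_add hD
  rw [h1, ← two_mul] at h3
  rw [h2, tsum_mul_left, add_zero] at h4
  rw [← h3, ← h4]
  refine tsum_congr (fun x => ?_)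
  rcases x with ⟨a, b, k⟩
  simp only
  by_cases h5 : a = b
  · subst h5; simp [P]
  by_cases h6 : a = -b
  · subst h6; simp [P]
  have i1 : |b| < a ↔ (0 < a + b ∧ 0 < a - b) := by
    rw [abs_lt]; constructor <;> intro h <;> constructor <;> omega
  have i2 : |a| < |b| ↔ ((0 < a + b ∧ ¬ 0 < a - b) ∨ (¬ 0 < a + b ∧ 0 < a - b)) := by
    rcases abs_cases a with ⟨e, _⟩ | ⟨e, _⟩ <;> rcases abs_cases b with ⟨e', _⟩ | ⟨e', _⟩ <;>
      rw [e, e'] <;> omega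
  simp only [i1, i2]
  by_cases h7 : 0 < a + b <;> by_cases h8 : 0 < a - b <;> simp only [h7, h8] <;> simp
  ring

lemma step3 : ∑' x : ℤ × ℤ × ℤ, (if |x.2.1| < x.1 then (x.1 : ℝ) * P x.1 x.2.1 x.2.2 else 0)
    = 2 * ∑' x : ℤ × ℤ × ℤ, (if |x.2.1| < x.1 ∧ x.1 < x.2.2 then
      (x.1 : ℝ) * P x.1 x.2.1 x.2.2 else 0) := by
  have hA := sumIf sumA (fun x => |x.2.1| < x.1 ∧ x.1 < x.2.2)
  have hB := sumIf sumA (fun x => |x.2.1| < x.1 ∧ x.1 < -x.2.2)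
  have hC := sumIf sumA (fun x => |x.2.1| < x.1 ∧ |x.2.2| < x.1)
  have h1 : ∑' x : ℤ × ℤ × ℤ, (if |x.2.1| < x.1 ∧ x.1 < -x.2.2 then (x.1 : ℝ) * P x.1 x.2.1 x.2.2 else 0)
      = ∑' x : ℤ × ℤ × ℤ, (if |x.2.1| < x.1 ∧ x.1 < x.2.2 then (x.1 : ℝ) * P x.1 x.2.1 x.2.2 else 0) := by
    rw [← en3.tsum_eq]
    refine tsum_congr (fun x => ?_)
    rcases x with ⟨a, b, k⟩
    simp only [en3, Equiv.coe_fn_mk, P_neg3 a b k, neg_neg]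
  have h2 : ∑' x : ℤ × ℤ × ℤ, (if |x.2.1| < x.1 ∧ |x.2.2| < x.1 then (x.1 : ℝ) * P x.1 x.2.1 x.2.2 else 0) = 0 := by
    refine tsum_anti e23 (fun x => ?_)
    rcases x with ⟨a, b, k⟩
    simp only [e23, Equiv.coe_fn_mk, P_swap23 a b k, and_comm]
    split_ifs <;> ring
  have h3 := (hA.add hB).tsum_add hC
  rw [hA.tsum_add hB, h1, h2, add_zero, ← two_mul] at h3
  rw [← h3]
  refine tsum_congr (fun x => ?_)
  rcases x with ⟨a, b, k⟩
  simp only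
  by_cases h5 : k = a
  · subst h5; simp [P]
  by_cases h6 : k = -a
  · subst h6; simp [P]
  by_cases h7 : |b| < a
  · have ha : 0 < a := lt_of_le_of_lt (abs_nonneg b) h7
    simp only [h7, true_and, if_true]
    rcases lt_trichotomy a k with h | h | h
    · have i1 : ¬ a < -k := by omega
      have i2 : ¬ |k| < a := by rw [abs_lt]; omega
      simp [h, i1, i2]
    · omega
    · have i0 : ¬ a < k := by omega
      by_cases h8 : a < -k
      · have i2 : ¬ |k| < a := by rw [abs_lt]; omega
        simp [h8, i0, i2]
      · have i2 : |k| < a := by rw [abs_lt]; omega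
        simp [h8, i0, i2]
  · simp [h7]

lemma step4 : ∑' x : ℤ × ℤ × ℤ, (if |x.2.1| < x.1 ∧ x.1 < x.2.2 then
      (x.1 : ℝ) * P x.1 x.2.1 x.2.2 else 0) =
    ∑' x : ℤ × ℤ × ℤ, (if |x.2.1| < x.1 ∧ x.1 < x.2.2 then
      ((x.1 : ℝ) + x.2.1) * P x.1 x.2.1 x.2.2 else 0) := by
  have hA := sumIf sumA (fun x => |x.2.1| < x.1 ∧ x.1 < x.2.2)
  have hB := sumIf sumBB (fun x => |x.2.1| < x.1 ∧ x.1 < x.2.2)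
  have h2 : ∑' x : ℤ × ℤ × ℤ, (if |x.2.1| < x.1 ∧ x.1 < x.2.2 then
      (x.2.1 : ℝ) * P x.1 x.2.1 x.2.2 else 0) = 0 := by
    refine tsum_anti en2 (fun x => ?_)
    rcases x with ⟨a, b, k⟩
    simp only [en2, Equiv.coe_fn_mk, P_neg2 a b k, abs_neg, Int.cast_neg]
    split_ifs <;> ring
  have h3 := hA.tsum_add hB
  rw [h2, add_zero] at h3
  rw [← h3]
  refine tsum_congr (fun x => ?_)
  split_ifs <;> ring

noncomputable def FF (x : ℤ × ℤ × ℤ) : ℝ :=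
  if (0 < x.1 ∧ 0 < x.2.1 ∧ 0 < x.2.2) ∧ x.1 % 2 = x.2.2 % 2 then
    (x.1 : ℝ) * (((x.1 : ℝ) * x.2.1 * x.2.2 * (x.1 + x.2.1) * (x.2.1 + x.2.2)
      * (x.1 + x.2.1 + x.2.2)) ^ 3)⁻¹ else 0

lemma step5 : ∑' x : ℤ × ℤ × ℤ, (if |x.2.1| < x.1 ∧ x.1 < x.2.2 then
      ((x.1 : ℝ) + x.2.1) * P x.1 x.2.1 x.2.2 else 0) = ∑' x, FF x := by
  rw [← phi_inj.tsum_eq (f := FF)]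
  · refine tsum_congr (fun x => ?_)
    rcases x with ⟨a, b, k⟩
    have i1 : (|b| < a ∧ a < k) ↔
        ((0 < a + b ∧ 0 < k - a ∧ 0 < a - b) ∧ (a + b) % 2 = (a - b) % 2) := by
      rw [abs_lt]; omega
    simp only [FF, i1]
    split_ifs
    · unfold P; push_cast; congr 2; ring
    · rfl
  · rintro ⟨l, m, n⟩ h
    have h' : l % 2 = n % 2 := by
      by_contra hc
      apply h
      simp [FF, hc]
    refine ⟨((l + n) / 2, (l - n) / 2, m + (l + n) / 2), ?_⟩
    simp only [Prod.mk.injEq]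
    omega

lemma step6 : ∑' x, FF x = ∑' t : ℕ × ℕ × ℕ, FF (t.1 + 1, t.2.1 + 1, t.2.2 + 1) := by
  have hi : Function.Injective (fun t : ℕ × ℕ × ℕ =>
      (((t.1 : ℤ) + 1, (t.2.1 : ℤ) + 1, (t.2.2 : ℤ) + 1) : ℤ × ℤ × ℤ)) := by
    rintro ⟨a, b, k⟩ ⟨a', b', k'⟩ h
    simp only [Prod.mk.injEq] at h ⊢
    omega
  rw [← hi.tsum_eq (f := FF)]
  rintro ⟨l, m, n⟩ h
  have h' : 0 < l ∧ 0 < m ∧ 0 < n := by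
    by_contra hc
    apply h
    simp only [FF, hc, false_and, if_false]
  refine ⟨((l - 1).toNat, (m - 1).toNat, (n - 1).toNat), ?_⟩
  simp only [Prod.mk.injEq]
  omega


lemma innerK (a b : ℤ) (hl : a + b ≠ 0) :
    HasSum (fun k : ℤ => ((a : ℝ) - b) * P a b k) (TT a b) := by
  by_cases hn : a = b
  · subst hn
    simp [TT, hasSum_zero]
  have hsq : a ^ 2 ≠ b ^ 2 := by
    intro h
    rcases sq_eq_sq_iff_eq_or_eq_neg.mp h with h | h <;> omega
  refine hs_congr ((hE a b hsq).mul_left (((a : ℝ) - b) * (((a : ℝ) ^ 2 - b ^ 2) ^ 3)⁻¹))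
    (fun k => ?_) rfl
  unfold P
  rw [mul_pow, mul_inv, mul_assoc]

noncomputable def gg (l : ℤ) : ℝ := if 0 < l then (if l % 2 = 0 then GGe l else GGo l) else 0

lemma hasGG : HasSum gg (∑' x : ℤ × ℤ × ℤ,
    (if 0 < x.1 + x.2.1 then ((x.1 : ℝ) - x.2.1) * P x.1 x.2.1 x.2.2 else 0)) := by
  have h0 := (sumIf sumMinus (fun x => 0 < x.1 + x.2.1)).hasSum
  have h1 := esh.hasSum_iff.mpr h0
  refine h1.prod_fiberwise (fun l => ?_)
  have hs := (h1.summable.prod_factor l).hasSum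
  refine hs_congr hs (fun _ => rfl) ?_
  by_cases hl : 0 < l
  · have h2 := hs.prod_fiberwise (g := fun b => TT (l - b) b) (fun b => by
      refine hs_congr (innerK (l - b) b (by omega)) (fun k => ?_) rfl
      simp [esh, hl])
    rcases Int.even_or_odd' l with ⟨c, hc | hc⟩
    · have h3 := sumTTe c (by omega)
      rw [← hc] at h3
      have : l % 2 = 0 := by omega
      simp only [gg, hl, this, if_true]
      exact h3.unique h2
    · have h3 := sumTTo c
      rw [← hc] at h3
      have : ¬ l % 2 = 0 := by omega
      simp only [gg, hl, this, if_true, if_false]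
      exact h3.unique h2
  · simp [gg, hl, esh]

noncomputable def zt (j : ℕ) : ℝ := ∑' n : ℕ, 1 / (n : ℝ) ^ j

lemma hzt {j : ℕ} (hj : 1 < j) : HasSum (fun n : ℕ => ((n : ℝ) ^ j)⁻¹) (zt j) := by
  have := ((Real.summable_one_div_nat_pow (p := j)).mpr hj).hasSum
  simpa [zt] using this

lemma hze {j : ℕ} (hj : 1 < j) :
    HasSum (fun n : ℕ => ((((2 * n : ℕ) : ℝ)) ^ j)⁻¹) ((2 ^ j)⁻¹ * zt j) := by
  refine hs_congr ((hzt hj).mul_left _) (fun n => ?_) rfl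
  push_cast
  rw [mul_pow, mul_inv]

lemma hzo {j : ℕ} (hj : 1 < j) :
    HasSum (fun n : ℕ => ((((2 * n + 1 : ℕ) : ℝ)) ^ j)⁻¹) ((1 - (2 ^ j)⁻¹) * zt j) := by
  have h := hzt hj
  have hs : Summable (fun n : ℕ => ((((2 * n + 1 : ℕ) : ℝ)) ^ j)⁻¹) :=
    h.summable.comp_injective (i := fun n : ℕ => 2 * n + 1) (by intro a b; simp)
  have h3 := HasSum.even_add_odd (f := fun n : ℕ => ((n : ℝ) ^ j)⁻¹) (hze hj) hs.hasSum
  have h4 := h3.unique h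
  convert hs.hasSum using 1
  linarith

lemma hasGGnat : HasSum (fun n : ℕ => gg n) (4 * (
    17 * π ^ 8 / 688128 * zt 9 + 150461 * π ^ 6 / 10321920 * zt 11
    + 2365283 * π ^ 4 / 491520 * zt 13 - 32112653 * π ^ 2 / 196608 * zt 15
    + 36995525 / 32768 * zt 17)) := by
  have he := (((((hze (j := 9) (by norm_num)).mul_left (- 1 / 10080 * π ^ 8)).add
    ((hze (j := 11) (by norm_num)).mul_left (13 / 2520 * π ^ 6))).add
    ((hze (j := 13) (by norm_num)).mul_left (527 / 60 * π ^ 4))).sub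
    ((hze (j := 15) (by norm_num)).mul_left (662 * π ^ 2))).add
    ((hze (j := 17) (by norm_num)).mul_left 11764)
  have ho := (((((hzo (j := 9) (by norm_num)).mul_left (1 / 10080 * π ^ 8)).add
    ((hzo (j := 11) (by norm_num)).mul_left (7 / 120 * π ^ 6))).add
    ((hzo (j := 13) (by norm_num)).mul_left (77 / 4 * π ^ 4))).sub
    ((hzo (j := 15) (by norm_num)).mul_left (1960 / 3 * π ^ 2))).add
    ((hzo (j := 17) (by norm_num)).mul_left 4516)
  have h := HasSum.even_add_odd (f := fun n : ℕ => gg n)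
    (hs_congr he (fun n => ?_) rfl) (hs_congr ho (fun n => ?_) rfl)
  · refine hs_congr h (fun _ => rfl) ?_
    ring
  · rcases Nat.eq_zero_or_pos n with rfl | hn
    · simp [gg]
    · have i1 : (0 : ℤ) < ((2 * n : ℕ) : ℤ) := by omega
      have i2 : ((2 * n : ℕ) : ℤ) % 2 = 0 := by omega
      simp only [gg, i1, i2, if_true, GGe, Int.cast_natCast]
  · have i1 : (0 : ℤ) < ((2 * n + 1 : ℕ) : ℤ) := by omega
    have i2 : ¬ ((2 * n + 1 : ℕ) : ℤ) % 2 = 0 := by omega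
    simp only [gg, i1, i2, if_true, if_false, GGo, Int.cast_natCast]

lemma realMain : ∑' t : ℕ × ℕ × ℕ, FF (t.1 + 1, t.2.1 + 1, t.2.2 + 1) =
    17 * π ^ 8 / 688128 * zt 9 + 150461 * π ^ 6 / 10321920 * zt 11
    + 2365283 * π ^ 4 / 491520 * zt 13 - 32112653 * π ^ 2 / 196608 * zt 15
    + 36995525 / 32768 * zt 17 := by
  have h1 := hasGG
  rw [step1, step2, step3, step4, step5, step6] at h1
  have hi : Function.Injective (fun n : ℕ => (n : ℤ)) := Nat.cast_injective
  have h2 := (hi.hasSum_iff (f := gg) (fun x hx => by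
    have : ¬ 0 < x := by
      intro h
      exact hx ⟨x.toNat, by simp; omega⟩
    simp [gg, this])).mpr h1
  have h3 := h2.unique hasGGnat
  linarith

lemma zt_cast {j : ℕ} (hj : 1 < j) : riemannZeta (j : ℂ) = ((zt j : ℝ) : ℂ) := by
  rw [zeta_nat_eq_tsum_of_gt_one hj, zt, Complex.ofReal_tsum]
  simp

end SO6



/-- `ζ₃((2,3,3,3,3,3); SO(6))` evaluated in terms of Riemann zeta values
(Equation (6.5) of Komori–Matsumoto–Tsumura). -/
theorem SO6_value_233333 :
    (∑' t : ℕ × ℕ × ℕ,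
        if (t.1 + 1) % 2 = (t.2.2 + 1) % 2 then
          (1 : ℂ) /
            (((t.1 + 1 : ℕ) : ℂ) ^ 2 * ((t.2.1 + 1 : ℕ) : ℂ) ^ 3 *
              ((t.2.2 + 1 : ℕ) : ℂ) ^ 3 * ((t.1 + 1 + (t.2.1 + 1) : ℕ) : ℂ) ^ 3 *
              ((t.2.1 + 1 + (t.2.2 + 1) : ℕ) : ℂ) ^ 3 *
              ((t.1 + 1 + (t.2.1 + 1) + (t.2.2 + 1) : ℕ) : ℂ) ^ 3)
        else 0) =
      (17 * (π : ℂ) ^ 8 / 688128) * riemannZeta 9 +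
        (150461 * (π : ℂ) ^ 6 / 10321920) * riemannZeta 11 +
        (2365283 * (π : ℂ) ^ 4 / 491520) * riemannZeta 13 -
        (32112653 * (π : ℂ) ^ 2 / 196608) * riemannZeta 15 +
        (36995525 / 32768) * riemannZeta 17 := by
  have h9 := SO6.zt_cast (j := 9) (by norm_num)
  have h11 := SO6.zt_cast (j := 11) (by norm_num)
  have h13 := SO6.zt_cast (j := 13) (by norm_num)
  have h15 := SO6.zt_cast (j := 15) (by norm_num)
  have h17 := SO6.zt_cast (j := 17) (by norm_num)
  push_cast at h9 h11 h13 h15 h17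
  have hm := congrArg (fun x : ℝ => (x : ℂ)) SO6.realMain
  simp only [Complex.ofReal_tsum] at hm
  rw [h9, h11, h13, h15, h17]
  refine Eq.trans (tsum_congr (fun t => ?_)) (hm.trans (by push_cast; ring))
  rcases t with ⟨a, b, k⟩
  have i0 : (0 : ℤ) < (a : ℤ) + 1 ∧ (0 : ℤ) < (b : ℤ) + 1 ∧ (0 : ℤ) < (k : ℤ) + 1 := by omega
  have i1 : ((a : ℤ) + 1) % 2 = ((k : ℤ) + 1) % 2 ↔ (a + 1) % 2 = (k + 1) % 2 := by omega
  simp only [SO6.FF, i0, i1, true_and, and_true]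
  split_ifs
  · have ha : ((a : ℂ) + 1) ≠ 0 := by exact_mod_cast Nat.succ_ne_zero a
    push_cast
    simp only [mul_pow, mul_inv, one_div]
    have : ((a : ℂ) + 1) * (((a : ℂ) + 1) ^ 3)⁻¹ = (((a : ℂ) + 1) ^ 2)⁻¹ := by field_simp
    rw [← this]
    ring
  · simp
end
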